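/- arXiv:2504.12566 — 6 statements merged into one kernel-verified Lean document; each statement's English description precedes it below -/
import Mathlib

section
/- Every automorphism of the monoid P_fin(ℤ) is of the form ε·f_α or ε·g_α for some integer α and some sign ε ∈ {+1, −1}; and conversely, for every integer α and every sign ε, the maps ε·f_α and ε·g_α are automorphisms of P_fin(ℤ). Here f_α(X) := X + α·min X − α·max X, g_α(X) := X + (α−1)·min X − (α+1)·max X, and (−F)(X) := −F(X) denotes the pointwise negation of the output. -/
open Finset Pointwise

/-- Nonempty finite subsets of ℤ. -/
abbrev NFin : Type := {X : Finset ℤ // X.Nonempty}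

/-- Sumset operation on nonempty finite subsets of ℤ. -/
instance : Add NFin := ⟨fun X Y => ⟨X.1 + Y.1, X.2.add Y.2⟩⟩

/-- Minimum of a nonempty finite subset of ℤ. -/
def minz (X : NFin) : ℤ := X.1.min' X.2

/-- Maximum of a nonempty finite subset of ℤ. -/
def maxz (X : NFin) : ℤ := X.1.max' X.2

/-- Translate `X + c`. -/
def tr (X : NFin) (c : ℤ) : NFin := ⟨X.1.image (· + c), X.2.image _⟩

/-- `f_α(X) = X + α·min X − α·max X`. -/
def fa (α : ℤ) (X : NFin) : NFin := tr X (α * minz X - α * maxz X)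

/-- `g_α(X) = X + (α−1)·min X − (α+1)·max X`. -/
def ga (α : ℤ) (X : NFin) : NFin := tr X ((α - 1) * minz X - (α + 1) * maxz X)

/-- Pointwise negation `X ↦ −X`. -/
def negF (X : NFin) : NFin := ⟨-X.1, X.2.neg⟩

namespace NFin

theorem mem_add {X Y : NFin} {z : ℤ} : z ∈ (X + Y).1 ↔ ∃ x ∈ X.1, ∃ y ∈ Y.1, x + y = z :=
  Finset.mem_add

theorem mem_tr {X : NFin} {c z : ℤ} : z ∈ (tr X c).1 ↔ z - c ∈ X.1 := by
  simp only [tr, Finset.mem_image]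
  constructor
  · rintro ⟨x, hx, rfl⟩
    simpa using hx
  · intro h
    exact ⟨_, h, by ring⟩

theorem mem_negF {X : NFin} {z : ℤ} : z ∈ (negF X).1 ↔ -z ∈ X.1 := by
  simp [negF]

theorem ext_mem {X Y : NFin} (h : ∀ z, z ∈ X.1 ↔ z ∈ Y.1) : X = Y :=
  Subtype.ext (Finset.ext h)

theorem minz_mem (X : NFin) : minz X ∈ X.1 := Finset.min'_mem _ _

theorem maxz_mem (X : NFin) : maxz X ∈ X.1 := Finset.max'_mem _ _

theorem minz_le {X : NFin} {x : ℤ} (h : x ∈ X.1) : minz X ≤ x := Finset.min'_le _ _ h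

theorem le_maxz {X : NFin} {x : ℤ} (h : x ∈ X.1) : x ≤ maxz X := Finset.le_max' _ _ h

theorem minz_eq {X : NFin} {m : ℤ} (hm : m ∈ X.1) (h : ∀ x ∈ X.1, m ≤ x) : minz X = m :=
  le_antisymm (minz_le hm) (h _ (minz_mem X))

theorem maxz_eq {X : NFin} {m : ℤ} (hm : m ∈ X.1) (h : ∀ x ∈ X.1, x ≤ m) : maxz X = m :=
  le_antisymm (h _ (maxz_mem X)) (le_maxz hm)

theorem minz_add (X Y : NFin) : minz (X + Y) = minz X + minz Y := by
  refine minz_eq (mem_add.2 ⟨_, minz_mem X, _, minz_mem Y, rfl⟩) fun z hz => ?_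
  obtain ⟨x, hx, y, hy, rfl⟩ := mem_add.1 hz
  exact add_le_add (minz_le hx) (minz_le hy)

theorem maxz_add (X Y : NFin) : maxz (X + Y) = maxz X + maxz Y := by
  refine maxz_eq (mem_add.2 ⟨_, maxz_mem X, _, maxz_mem Y, rfl⟩) fun z hz => ?_
  obtain ⟨x, hx, y, hy, rfl⟩ := mem_add.1 hz
  exact add_le_add (le_maxz hx) (le_maxz hy)

theorem minz_tr (X : NFin) (c : ℤ) : minz (tr X c) = minz X + c := by
  refine minz_eq (mem_tr.2 (by simpa using minz_mem X)) fun z hz => ?_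
  have := minz_le (mem_tr.1 hz)
  omega

theorem maxz_tr (X : NFin) (c : ℤ) : maxz (tr X c) = maxz X + c := by
  refine maxz_eq (mem_tr.2 (by simpa using maxz_mem X)) fun z hz => ?_
  have := le_maxz (mem_tr.1 hz)
  omega

theorem tr_zero (X : NFin) : tr X 0 = X := ext_mem fun z => by simp [mem_tr]

theorem tr_tr (X : NFin) (c d : ℤ) : tr (tr X c) d = tr X (c + d) :=
  ext_mem fun z => by rw [mem_tr, mem_tr, mem_tr, sub_sub, add_comm d]

theorem tr_add_tr (X Y : NFin) (c d : ℤ) : tr X c + tr Y d = tr (X + Y) (c + d) := by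
  refine ext_mem fun z => ?_
  simp only [mem_add, mem_tr]
  constructor
  · rintro ⟨x, hx, y, hy, rfl⟩
    exact ⟨_, hx, _, hy, by ring⟩
  · rintro ⟨x, hx, y, hy, h⟩
    exact ⟨x + c, by simpa using hx, y + d, by simpa using hy, by linarith⟩

theorem negF_add (X Y : NFin) : negF (X + Y) = negF X + negF Y := by
  refine ext_mem fun z => ?_
  simp only [mem_add, mem_negF]
  constructor
  · rintro ⟨x, hx, y, hy, h⟩
    exact ⟨-x, by simpa using hx, -y, by simpa using hy, by linarith⟩
  · rintro ⟨x, hx, y, hy, h⟩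
    exact ⟨_, hx, _, hy, by linarith⟩

theorem negF_involutive : Function.Involutive negF := fun X =>
  ext_mem fun z => by simp [mem_negF]

/-! ### The maps `fa` and `ga` are automorphisms -/

theorem fa_add (α : ℤ) (X Y : NFin) : fa α (X + Y) = fa α X + fa α Y := by
  simp only [fa, tr_add_tr, minz_add, maxz_add]
  congr 1
  ring

theorem ga_add (α : ℤ) (X Y : NFin) : ga α (X + Y) = ga α X + ga α Y := by
  simp only [ga, tr_add_tr, minz_add, maxz_add]
  congr 1
  ring

theorem fa_neg_fa (α : ℤ) (X : NFin) : fa (-α) (fa α X) = X := by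
  simp only [fa, tr_tr, minz_tr, maxz_tr]
  conv_rhs => rw [← tr_zero X]
  congr 1
  ring

theorem ga_involutive (α : ℤ) : Function.Involutive (ga α) := fun X => by
  simp only [ga, tr_tr, minz_tr, maxz_tr]
  conv_rhs => rw [← tr_zero X]
  congr 1
  ring

theorem fa_bijective (α : ℤ) : Function.Bijective (fa α) :=
  Function.bijective_iff_has_inverse.2
    ⟨fa (-α), fa_neg_fa α, fun X => by simpa using fa_neg_fa (-α) X⟩

/-! ### Singletons, intervals and additive functionals -/

/-- The singleton `{c}`. -/
def sing (c : ℤ) : NFin := ⟨{c}, Finset.singleton_nonempty c⟩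

/-- The interval `{0, …, n}`. -/
noncomputable def interval (n : ℕ) : NFin := ⟨Finset.Icc 0 (n : ℤ), ⟨0, by simp⟩⟩

theorem mem_sing {c z : ℤ} : z ∈ (sing c).1 ↔ z = c := by simp [sing]

theorem mem_interval {n : ℕ} {z : ℤ} : z ∈ (interval n).1 ↔ 0 ≤ z ∧ z ≤ n := by simp [interval]

theorem sing_add_sing (c d : ℤ) : sing c + sing d = sing (c + d) :=
  ext_mem fun z => by simp [mem_add, mem_sing, eq_comm]

theorem add_sing (X : NFin) (c : ℤ) : X + sing c = tr X c := by
  refine ext_mem fun z => ?_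
  simp only [mem_add, mem_sing, mem_tr]
  constructor
  · rintro ⟨x, hx, y, rfl, rfl⟩
    simpa using hx
  · intro h
    exact ⟨_, h, c, rfl, by ring⟩

theorem interval_succ (n : ℕ) : interval (n + 1) = interval n + interval 1 := by
  refine ext_mem fun z => ?_
  simp only [mem_add, mem_interval]
  push_cast
  constructor
  · intro h
    by_cases hz : z ≤ n
    · exact ⟨z, by omega, 0, by omega, by omega⟩
    · exact ⟨n, by omega, 1, by omega, by omega⟩
  · rintro ⟨x, hx, y, hy, rfl⟩
    omega

theorem add_interval (X : NFin) (n : ℕ) (hn : maxz X - minz X = n) :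
    X + interval n = sing (minz X) + interval (n + n) := by
  refine ext_mem fun z => ?_
  simp only [mem_add, mem_interval, mem_sing, Nat.cast_add]
  constructor
  · rintro ⟨x, hx, y, hy, rfl⟩
    have h1 := minz_le hx
    have h2 := le_maxz hx
    exact ⟨minz X, rfl, x + y - minz X, by omega, by omega⟩
  · rintro ⟨x, rfl, y, hy, rfl⟩
    by_cases hz : y ≤ n
    · exact ⟨_, minz_mem X, y, by omega, by omega⟩
    · exact ⟨_, maxz_mem X, y - n, by omega, by omega⟩

/-- An additive functional is determined by its values at `{1}` and `{0, 1}`. -/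
theorem additive_eq (h : NFin → ℤ) (hadd : ∀ X Y, h (X + Y) = h X + h Y) (X : NFin) :
    h X = minz X * h (sing 1) + (maxz X - minz X) * h (interval 1) := by
  have hsing : ∀ c : ℤ, h (sing c) = c * h (sing 1) := by
    let s : ℤ →+ ℤ := AddMonoidHom.mk' (fun c => h (sing c)) fun a b => by
      rw [← sing_add_sing, hadd]
    intro c
    have := map_zsmul s c 1
    simpa [s] using this
  have hInterval : ∀ n : ℕ, h (interval n) = n * h (interval 1) := by
    intro n
    induction n with
    | zero =>
      have h0 : interval 0 = sing 0 := ext_mem fun z => by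
        rw [mem_interval, mem_sing]; push_cast; omega
      rw [h0, hsing]; simp
    | succ n ih => rw [interval_succ, hadd, ih]; push_cast; ring
  have hle : minz X ≤ maxz X := minz_le (maxz_mem X)
  obtain ⟨n, hn⟩ := Int.eq_ofNat_of_zero_le (sub_nonneg.2 hle)
  have key := congrArg h (add_interval X n hn)
  rw [hadd, hadd, hInterval n, hInterval (n + n), hsing] at key
  rw [hn]
  push_cast at key
  linarith

/-! ### Sets with prescribed minimum `0` and maximum -/

/-- `X` has minimum `0` and maximum `n`. -/
def Spans (n : ℤ) (X : NFin) : Prop :=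
  0 ∈ X.1 ∧ n ∈ X.1 ∧ ∀ x ∈ X.1, 0 ≤ x ∧ x ≤ n

theorem spans_iff {n : ℤ} {X : NFin} : Spans n X ↔ minz X = 0 ∧ maxz X = n := by
  constructor
  · rintro ⟨h0, hn, h⟩
    exact ⟨minz_eq h0 fun x hx => (h x hx).1, maxz_eq hn fun x hx => (h x hx).2⟩
  · rintro ⟨h0, rfl⟩
    exact ⟨h0 ▸ minz_mem X, maxz_mem X, fun x hx => ⟨h0 ▸ minz_le hx, le_maxz hx⟩⟩

theorem Spans.add {m n : ℤ} {X Y : NFin} (hX : Spans m X) (hY : Spans n Y) :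
    Spans (m + n) (X + Y) := by
  rw [spans_iff] at *
  rw [minz_add, maxz_add, hX.1, hX.2, hY.1, hY.2]
  simp

theorem spans_interval (n : ℕ) : Spans n (interval n) := by
  refine ⟨?_, ?_, fun x hx => mem_interval.1 hx⟩ <;> rw [mem_interval] <;> omega

/-- The set `{0, a, n}`. -/
def triple (n a : ℤ) : NFin := ⟨{0, a, n}, ⟨0, by simp⟩⟩

theorem mem_triple {n a z : ℤ} : z ∈ (triple n a).1 ↔ z = 0 ∨ z = a ∨ z = n := by
  simp [triple]

theorem spans_triple {n a : ℤ} (h0 : 0 ≤ a) (hn : a ≤ n) : Spans n (triple n a) := by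
  refine ⟨mem_triple.2 (by simp), mem_triple.2 (by simp), fun x hx => ?_⟩
  rw [mem_triple] at hx
  omega

/-- The reflection `max X - X`. -/
def refl (X : NFin) : NFin := tr (negF X) (maxz X)

theorem mem_refl {X : NFin} {z : ℤ} : z ∈ (refl X).1 ↔ maxz X - z ∈ X.1 := by
  rw [refl, mem_tr, mem_negF, neg_sub]

theorem refl_add (X Y : NFin) : refl (X + Y) = refl X + refl Y := by
  simp only [refl, negF_add, maxz_add, tr_add_tr]

theorem Spans.mem_refl {n z : ℤ} {X : NFin} (h : Spans n X) : z ∈ (refl X).1 ↔ n - z ∈ X.1 := by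
  rw [NFin.mem_refl, (spans_iff.1 h).2]

theorem Spans.refl {n : ℤ} {X : NFin} (h : Spans n X) : Spans n (refl X) := by
  refine ⟨?_, ?_, fun x hx => ?_⟩
  · rw [h.mem_refl]; simpa using h.2.1
  · rw [h.mem_refl]; simpa using h.1
  · have := h.2.2 _ (h.mem_refl.1 hx); omega

theorem Spans.refl_refl {n : ℤ} {X : NFin} (h : Spans n X) : NFin.refl (NFin.refl X) = X :=
  ext_mem fun z => by rw [h.refl.mem_refl, h.mem_refl, sub_sub_cancel]

/-- A set `B` such that `A + B` is an interval exactly when `k ∈ A`, for `A` spanning `{0, …, n}`. -/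
noncomputable def probe (n k : ℤ) : NFin :=
  ⟨insert (2 * n - k) ((Finset.Icc 0 (n - 1)) ∪ Finset.Icc (2 * n + 1) (3 * n)), by simp⟩

theorem mem_probe {n k z : ℤ} : z ∈ (probe n k).1 ↔
    z = 2 * n - k ∨ (0 ≤ z ∧ z ≤ n - 1) ∨ (2 * n + 1 ≤ z ∧ z ≤ 3 * n) := by
  simp [probe]

theorem spans_probe {n k : ℤ} (h0 : 0 < k) (hn : k < n) : Spans (3 * n) (probe n k) := by
  refine ⟨mem_probe.2 (by omega), mem_probe.2 (by omega), fun x hx => ?_⟩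
  rw [mem_probe] at hx
  omega

theorem add_probe_eq_iff {n k : ℤ} {N : ℕ} {A : NFin} (hA : Spans n A) (h0 : 0 < k) (hn : k < n)
    (hN : (N : ℤ) = 4 * n) : A + probe n k = interval N ↔ k ∈ A.1 := by
  constructor
  · intro h
    have h2 : 2 * n ∈ (A + probe n k).1 := by rw [h, mem_interval]; omega
    obtain ⟨x, hx, y, hy, hxy⟩ := mem_add.1 h2
    have := hA.2.2 x hx
    rw [mem_probe] at hy
    have hxk : x = k := by omega
    exact hxk ▸ hx
  · intro hk
    refine ext_mem fun z => ?_
    simp only [mem_add, mem_interval, mem_probe]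
    constructor
    · rintro ⟨x, hx, y, hy, rfl⟩
      have := hA.2.2 x hx
      omega
    · intro hz
      by_cases h2 : z = 2 * n
      · exact ⟨k, hk, 2 * n - k, by omega, by omega⟩
      by_cases hB : z = 2 * n - k ∨ (0 ≤ z ∧ z ≤ n - 1) ∨ (2 * n + 1 ≤ z ∧ z ≤ 3 * n)
      · exact ⟨0, hA.1, z, hB, by omega⟩
      · exact ⟨n, hA.2.1, z - n, by omega, by omega⟩

theorem triple_add_interval_eq_iff {n a : ℤ} {m N : ℕ} (h0 : 0 < a) (hn : a < n)
    (hN : (N : ℤ) = n + m) :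
    triple n a + interval m = interval N ↔ a ≤ m + 1 ∧ n - a ≤ m + 1 := by
  constructor
  · intro h
    have h1 : a - 1 ∈ (triple n a + interval m).1 := by rw [h, mem_interval]; omega
    have h2 : n - 1 ∈ (triple n a + interval m).1 := by rw [h, mem_interval]; omega
    obtain ⟨x, hx, y, hy, hxy⟩ := mem_add.1 h1
    obtain ⟨x', hx', y', hy', hxy'⟩ := mem_add.1 h2
    rw [mem_triple] at hx hx'
    rw [mem_interval] at hy hy'
    omega
  · intro h
    refine ext_mem fun z => ?_
    simp only [mem_add, mem_interval, mem_triple]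
    constructor
    · rintro ⟨x, hx, y, hy, rfl⟩
      omega
    · intro hz
      by_cases h1 : z < a
      · exact ⟨0, by omega, z, by omega, by omega⟩
      by_cases h2 : z < n
      · exact ⟨a, by omega, z - a, by omega, by omega⟩
      · exact ⟨n, by omega, z - n, by omega, by omega⟩

/-! ### Reduced automorphisms -/

/-- `ψ` and `ψ'` are additive, preserve the minimum `0` together with the maximum, and are mutually
inverse on sets with minimum `0`. -/
structure IsReducedAut (ψ ψ' : NFin → NFin) : Prop where
  map_add : ∀ X Y, ψ (X + Y) = ψ X + ψ Y
  map_add' : ∀ X Y, ψ' (X + Y) = ψ' X + ψ' Y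
  spans : ∀ {n X}, Spans n X → Spans n (ψ X)
  spans' : ∀ {n X}, Spans n X → Spans n (ψ' X)
  left_inv : ∀ {n X}, Spans n X → ψ' (ψ X) = X
  right_inv : ∀ {n X}, Spans n X → ψ (ψ' X) = X

namespace IsReducedAut

variable {ψ ψ' : NFin → NFin}

theorem symm (H : IsReducedAut ψ ψ') : IsReducedAut ψ' ψ :=
  ⟨H.map_add', H.map_add, H.spans', H.spans, H.right_inv, H.left_inv⟩

theorem refl_comp (H : IsReducedAut ψ ψ') : IsReducedAut (refl ∘ ψ) (ψ' ∘ refl) where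
  map_add X Y := by simp only [Function.comp, H.map_add, refl_add]
  map_add' X Y := by simp only [Function.comp, H.map_add', refl_add]
  spans h := (H.spans h).refl
  spans' h := H.spans' h.refl
  left_inv h := by simp only [Function.comp, (H.spans h).refl_refl, H.left_inv h]
  right_inv h := by simp only [Function.comp, H.right_inv h.refl, h.refl_refl]

theorem map_interval (H : IsReducedAut ψ ψ') (n : ℕ) : ψ (interval n) = interval n := by
  have small : ∀ m : ℕ, m ≤ 1 → ψ (interval m) = interval m := by
    intro m hm
    have hs := H.spans (spans_interval m)
    refine ext_mem fun z => ?_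
    rw [mem_interval]
    refine ⟨fun hz => hs.2.2 z hz, fun hz => ?_⟩
    rcases (by omega : z = 0 ∨ z = m) with rfl | rfl
    · exact hs.1
    · exact hs.2.1
  induction n with
  | zero => exact small 0 (by simp)
  | succ n ih => rw [interval_succ, H.map_add, ih, small 1 le_rfl]

theorem map_add_eq_interval (H : IsReducedAut ψ ψ') {X Y : NFin} {N : ℕ}
    (h : X + Y = interval N) : ψ X + ψ Y = interval N := by
  rw [← H.map_add, h, H.map_interval]

theorem map_subset (H : IsReducedAut ψ ψ') {n : ℤ} {A C : NFin} (hA : Spans n A) (hC : Spans n C)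
    (h : A.1 ⊆ C.1) : (ψ A).1 ⊆ (ψ C).1 := by
  intro k hk
  have hkn := (H.spans hA).2.2 k hk
  by_cases h0 : k = 0
  · exact h0 ▸ (H.spans hC).1
  by_cases hn : k = n
  · exact hn ▸ (H.spans hC).2.1
  have h0' : 0 < k := by omega
  have hn' : k < n := by omega
  obtain ⟨N, hN⟩ := Int.eq_ofNat_of_zero_le (by omega : 0 ≤ 4 * n)
  have hB := spans_probe h0' hn'
  have h1 := H.symm.map_add_eq_interval
    ((add_probe_eq_iff (H.spans hA) h0' hn' hN.symm).2 hk)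
  rw [H.left_inv hA] at h1
  have h2 : C + ψ' (probe n k) = interval N := by
    have hs := hC.add (H.spans' hB)
    refine ext_mem fun z => ⟨fun hz => ?_, fun hz => ?_⟩
    · have := hs.2.2 z hz
      rw [mem_interval]
      omega
    · rw [← h1, mem_add] at hz
      obtain ⟨x, hx, hz⟩ := hz
      exact mem_add.2 ⟨x, h hx, hz⟩
  have h3 := H.map_add_eq_interval h2
  rw [H.right_inv hB] at h3
  exact (add_probe_eq_iff (H.spans hC) h0' hn' hN.symm).1 h3

theorem triple_subset {n a : ℤ} {A : NFin} (hA : Spans n A) :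
    (triple n a).1 ⊆ A.1 ↔ a ∈ A.1 := by
  refine ⟨fun h => h (mem_triple.2 (by simp)), fun h z hz => ?_⟩
  rcases mem_triple.1 hz with rfl | rfl | rfl
  exacts [hA.1, h, hA.2.1]

theorem map_pair (H : IsReducedAut ψ ψ') {n : ℤ} (hn : 0 ≤ n) :
    ψ (triple n 0) = triple n 0 := by
  have hs := spans_triple le_rfl hn
  refine Subtype.ext (Finset.Subset.antisymm ?_ ((triple_subset (H.spans hs)).2 (H.spans hs).1))
  have := H.map_subset hs (H.spans' hs) ((triple_subset (H.spans' hs)).2 (H.spans' hs).1)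
  rwa [H.right_inv hs] at this

theorem exists_map_triple (H : IsReducedAut ψ ψ') {n a : ℤ} (h0 : 0 < a) (hn : a < n) :
    ∃ b, 0 < b ∧ b < n ∧ ψ (triple n a) = triple n b := by
  have hs := spans_triple h0.le hn.le
  have hs0 : Spans n (triple n 0) := spans_triple le_rfl (by omega)
  have ne_pair : ∀ c, 0 < c → c < n → triple n c ≠ triple n 0 := by
    intro c hc hcn h
    have : c ∈ (triple n 0).1 := h ▸ mem_triple.2 (by simp)
    rw [mem_triple] at this
    omega
  have hψ := H.spans hs
  obtain ⟨b, hb, hb0, hbn⟩ : ∃ b ∈ (ψ (triple n a)).1, 0 < b ∧ b < n := by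
    by_contra! hcon
    refine ne_pair a h0 hn ?_
    rw [← H.left_inv hs, ← H.left_inv hs0, H.map_pair (by omega)]
    congr 1
    refine Subtype.ext (Finset.Subset.antisymm (fun z hz => ?_) ((triple_subset hψ).2 hψ.1))
    have h1 := hψ.2.2 z hz
    have h2 := hcon z hz
    rw [mem_triple]
    omega
  refine ⟨b, hb0, hbn, ?_⟩
  have hsb := spans_triple hb0.le hbn.le
  have hψb := H.spans' hsb
  have hsub := H.symm.map_subset hsb hψ ((triple_subset hψ).2 hb)
  rw [H.left_inv hs] at hsub
  have hmem : a ∈ (ψ' (triple n b)).1 := by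
    by_contra hna
    refine ne_pair b hb0 hbn ?_
    rw [← H.right_inv hsb, ← H.map_pair (by omega : 0 ≤ n)]
    congr 1
    refine Subtype.ext (Finset.Subset.antisymm (fun z hz => ?_) ((triple_subset hψb).2 hψb.1))
    have h1 := mem_triple.1 (hsub hz)
    rw [mem_triple]
    rcases h1 with h | rfl | h
    exacts [Or.inl h, absurd hz hna, Or.inr (Or.inr h)]
  rw [← H.right_inv hsb]
  congr 1
  exact Subtype.ext (Finset.Subset.antisymm ((triple_subset hψb).2 hmem) hsub)

theorem map_triple (H : IsReducedAut ψ ψ') {n a : ℤ} (h0 : 0 < a) (hn : a < n) :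
    ψ (triple n a) = triple n a ∨ ψ (triple n a) = triple n (n - a) := by
  obtain ⟨b, hb0, hbn, hb⟩ := H.exists_map_triple h0 hn
  have hs := spans_triple h0.le hn.le
  have key : ∀ m : ℕ, (a ≤ m + 1 ∧ n - a ≤ m + 1) ↔ (b ≤ m + 1 ∧ n - b ≤ m + 1) := by
    intro m
    obtain ⟨N, hN⟩ := Int.eq_ofNat_of_zero_le (by omega : 0 ≤ n + m)
    rw [← triple_add_interval_eq_iff h0 hn hN.symm, ← triple_add_interval_eq_iff hb0 hbn hN.symm,
      ← hb]
    constructor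
    · intro h
      simpa only [H.map_interval] using H.map_add_eq_interval h
    · intro h
      simpa only [H.symm.map_interval, H.left_inv hs] using H.symm.map_add_eq_interval h
  have k1 := key (max a (n - a) - 1).toNat
  have k2 := key (max b (n - b) - 1).toNat
  rw [hb]
  rcases (by omega : b = a ∨ b = n - a) with rfl | rfl
  · exact Or.inl rfl
  · exact Or.inr rfl

theorem mem_iff_of_map_triple (H : IsReducedAut ψ ψ') {n a b : ℤ} {A : NFin} (hA : Spans n A)
    (h0 : 0 ≤ a) (hn : a ≤ n) (h : ψ (triple n a) = triple n b) : a ∈ A.1 ↔ b ∈ (ψ A).1 := by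
  have hs := spans_triple h0 hn
  rw [← triple_subset hA, ← triple_subset (H.spans hA), ← h]
  refine ⟨H.map_subset hs hA, fun hsub => ?_⟩
  have := H.symm.map_subset (H.spans hs) (H.spans hA) hsub
  rwa [H.left_inv hs, H.left_inv hA] at this

theorem triple_injective {n a b : ℤ} (h0 : 0 < a) (hn : a < n) (h : triple n a = triple n b) :
    a = b := by
  have : a ∈ (triple n b).1 := h ▸ mem_triple.2 (by simp)
  rw [mem_triple] at this
  omega

/-- If `{0, 1, n}` is fixed then so is every `{0, a, n}` in the lower half. -/
theorem map_triple_of_lower (H : IsReducedAut ψ ψ') {n a : ℤ}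
    (h1 : ψ (triple n 1) = triple n 1) (h0 : 0 < a) (hn : 2 * a < n) :
    ψ (triple n a) = triple n a := by
  by_cases ha1 : a = 1
  · rw [ha1, h1]
  refine (H.map_triple h0 (by omega)).resolve_right fun hbad => ?_
  let Q : NFin := ⟨insert 1 (triple n a).1, by simp⟩
  have memQ : ∀ z, z ∈ Q.1 ↔ z = 1 ∨ z = 0 ∨ z = a ∨ z = n := fun z => by
    rw [← mem_triple]; exact Finset.mem_insert
  have hQ : Spans n Q :=
    ⟨(memQ 0).2 (by simp), (memQ n).2 (by simp), fun x hx => by rw [memQ] at hx; omega⟩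
  have m1 : 1 ∈ (ψ Q).1 :=
    (H.mem_iff_of_map_triple hQ (by omega) (by omega) h1).1 ((memQ 1).2 (by simp))
  have m2 : n - a ∈ (ψ Q).1 :=
    (H.mem_iff_of_map_triple hQ (by omega) (by omega) hbad).1 ((memQ a).2 (by simp))
  have hψ := H.spans hQ
  obtain ⟨m, hm⟩ := Int.eq_ofNat_of_zero_le (by omega : 0 ≤ n - a - 2)
  obtain ⟨N, hN⟩ := Int.eq_ofNat_of_zero_le (by omega : 0 ≤ n + m)
  have e1 : ψ Q + interval m = interval N := by
    refine ext_mem fun z => ?_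
    simp only [mem_add, mem_interval]
    constructor
    · rintro ⟨x, hx, y, hy, rfl⟩
      have := hψ.2.2 x hx
      omega
    · intro hz
      by_cases c1 : z < 1
      · exact ⟨0, hψ.1, z, by omega, by omega⟩
      by_cases c2 : z < n - a
      · exact ⟨1, m1, z - 1, by omega, by omega⟩
      by_cases c3 : z < n
      · exact ⟨n - a, m2, z - (n - a), by omega, by omega⟩
      · exact ⟨n, hψ.2.1, z - n, by omega, by omega⟩
  have e2 := H.symm.map_add_eq_interval e1
  rw [H.left_inv hQ, H.symm.map_interval] at e2
  have : n - 1 ∈ (Q + interval m).1 := by rw [e2, mem_interval]; omega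
  obtain ⟨x, hx, y, hy, hxy⟩ := mem_add.1 this
  rw [memQ] at hx
  rw [mem_interval] at hy
  omega

theorem map_eq_self (H : IsReducedAut ψ ψ') {n : ℤ}
    (h1 : 2 ≤ n → ψ (triple n 1) = triple n 1) {A : NFin} (hA : Spans n A) : ψ A = A := by
  have hψ := H.spans hA
  refine ext_mem fun z => ?_
  by_cases hz : z < 0 ∨ n < z
  · refine ⟨fun h => ?_, fun h => ?_⟩
    · have := hψ.2.2 z h; omega
    · have := hA.2.2 z h; omega
  by_cases z0 : z = 0
  · rw [z0]; exact ⟨fun _ => hA.1, fun _ => hψ.1⟩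
  by_cases zn : z = n
  · rw [zn]; exact ⟨fun _ => hA.2.1, fun _ => hψ.2.1⟩
  refine (H.mem_iff_of_map_triple hA (by omega) (by omega) ?_).symm
  have h1 := h1 (by omega)
  by_cases hlow : 2 * z < n
  · exact H.map_triple_of_lower h1 (by omega) hlow
  rcases H.map_triple (by omega : 0 < z) (by omega : z < n) with h | h
  · exact h
  by_cases hhalf : 2 * z = n
  · rw [h]; congr 1; omega
  have h' := H.map_triple_of_lower h1 (by omega : 0 < n - z) (by omega)
  have hs := spans_triple (by omega : 0 ≤ z) (by omega : z ≤ n)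
  have hs' := spans_triple (by omega : 0 ≤ n - z) (by omega : n - z ≤ n)
  have : triple n z = triple n (n - z) := by
    rw [← H.left_inv hs, ← H.left_inv hs', h, h']
  exact absurd (triple_injective (by omega) (by omega) this) (by omega)

theorem refl_triple {n a : ℤ} (h0 : 0 ≤ a) (hn : a ≤ n) :
    refl (triple n a) = triple n (n - a) := by
  refine ext_mem fun z => ?_
  rw [(spans_triple h0 hn).mem_refl, mem_triple, mem_triple]
  omega

theorem map_eq_self_or_refl (H : IsReducedAut ψ ψ') (n : ℤ) :
    (∀ A, Spans n A → ψ A = A) ∨ (∀ A, Spans n A → ψ A = refl A) := by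
  by_cases h : 2 ≤ n → ψ (triple n 1) = triple n 1
  · exact Or.inl fun A hA => H.map_eq_self h hA
  · right
    push Not at h
    obtain ⟨hn, h⟩ := h
    have h := (H.map_triple (by omega) (by omega)).resolve_left h
    intro A hA
    have := H.refl_comp.map_eq_self (n := n) (fun _ => by
      rw [Function.comp, h, refl_triple (by omega) (by omega), sub_sub_cancel]) hA
    rw [← (H.spans hA).refl_refl]
    exact congrArg refl this

theorem refl_eq_self_of_le_two {n : ℤ} (hn : n ≤ 2) {A : NFin} (hA : Spans n A) :
    refl A = A := by
  refine ext_mem fun z => ?_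
  rw [hA.mem_refl]
  by_cases h1 : n - z = z
  · rw [h1]
  by_cases hz : z < 0 ∨ n < z
  · refine ⟨fun h => ?_, fun h => ?_⟩ <;> have := hA.2.2 _ h <;> omega
  rcases (by omega : z = 0 ∨ z = n) with rfl | rfl
  · simp [hA.1, hA.2.1]
  · simp [hA.1, hA.2.1]

theorem eq_self_or_refl (H : IsReducedAut ψ ψ') :
    (∀ n A, Spans n A → ψ A = A) ∨ (∀ n A, Spans n A → ψ A = refl A) := by
  by_contra! hcon
  obtain ⟨⟨n', A', hA', hne'⟩, ⟨n, A, hA, hne⟩⟩ := hcon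
  have hid := (H.map_eq_self_or_refl n).resolve_right fun h => hne (h A hA)
  have href := (H.map_eq_self_or_refl n').resolve_left fun h => hne' (h A' hA')
  have hn : 3 ≤ n := by
    by_contra h
    exact hne ((hid A hA).trans (refl_eq_self_of_le_two (by omega) hA).symm)
  have hn' : 3 ≤ n' := by
    by_contra h
    exact hne' ((href A' hA').trans (refl_eq_self_of_le_two (by omega) hA'))
  have hs := spans_triple (by omega : (0 : ℤ) ≤ 1) (by omega : 1 ≤ n)
  have hs' := spans_triple (by omega : (0 : ℤ) ≤ 1) (by omega : 1 ≤ n')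
  have hsum := H.map_add (triple n 1) (triple n' 1)
  rw [hid _ hs, href _ hs', refl_triple (by omega) (by omega)] at hsum
  rcases H.map_eq_self_or_refl (n + n') with h | h
  · rw [h _ (hs.add hs')] at hsum
    have : n + (n' - 1) ∈ (triple n 1 + triple n' 1).1 := by
      rw [hsum]
      exact mem_add.2 ⟨n, mem_triple.2 (by simp), n' - 1, mem_triple.2 (by simp), rfl⟩
    obtain ⟨x, hx, y, hy, hxy⟩ := mem_add.1 this
    rw [mem_triple] at hx hy
    omega
  · rw [h _ (hs.add hs'), refl_add, refl_triple (by omega) (by omega),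
      refl_triple (by omega) (by omega)] at hsum
    have : 1 + 0 ∈ (triple n (n - 1) + triple n' (n' - 1)).1 := by
      rw [hsum]
      exact mem_add.2 ⟨1, mem_triple.2 (by simp), 0, mem_triple.2 (by simp), rfl⟩
    obtain ⟨x, hx, y, hy, hxy⟩ := mem_add.1 this
    rw [mem_triple] at hx hy
    omega

end IsReducedAut

/-! ### From automorphisms to reduced automorphisms -/

/-- The translate of `X` with minimum `0`. -/
def norm (X : NFin) : NFin := tr X (-minz X)

theorem norm_add (X Y : NFin) : norm (X + Y) = norm X + norm Y := by
  simp only [norm, tr_add_tr, minz_add, neg_add]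

theorem minz_norm (X : NFin) : minz (norm X) = 0 := by
  rw [norm, minz_tr, add_neg_cancel]

theorem norm_tr (X : NFin) (c : ℤ) : norm (tr X c) = norm X := by
  rw [norm, norm, minz_tr, tr_tr]
  congr 1
  ring

theorem tr_norm (X : NFin) : tr (norm X) (minz X) = X := by
  rw [norm, tr_tr, neg_add_cancel, tr_zero]

theorem norm_eq_self {X : NFin} (h : minz X = 0) : norm X = X := by
  rw [norm, h, neg_zero, tr_zero]

theorem eq_sing {X : NFin} (h : maxz X = minz X) : X = sing (minz X) := by
  refine ext_mem fun z => ?_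
  rw [mem_sing]
  refine ⟨fun hz => ?_, fun hz => hz ▸ minz_mem X⟩
  have h1 := minz_le hz
  have h2 := le_maxz hz
  omega

theorem minz_sing (c : ℤ) : minz (sing c) = c :=
  minz_eq (mem_sing.2 rfl) fun _ hx => (mem_sing.1 hx).ge

theorem maxz_sing (c : ℤ) : maxz (sing c) = c :=
  maxz_eq (mem_sing.2 rfl) fun _ hx => (mem_sing.1 hx).le

/-- An automorphism multiplies the diameter `max X - min X` by a constant. -/
theorem maxz_sub_minz_map (e : NFin ≃+ NFin) (X : NFin) :
    maxz (e X) - minz (e X) =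
      (maxz X - minz X) * (maxz (e (interval 1)) - minz (e (interval 1))) := by
  have h := additive_eq (fun X => maxz (e X) - minz (e X)) fun X Y => by
    rw [map_add, maxz_add, minz_add]; ring
  have nonneg : ∀ Y, 0 ≤ maxz (e Y) - minz (e Y) := fun Y =>
    sub_nonneg.2 (minz_le (maxz_mem _))
  have h1 := h (sing (-1))
  rw [minz_sing, maxz_sing] at h1
  have h2 := nonneg (sing 1)
  have h3 := nonneg (sing (-1))
  have h4 : maxz (e (sing 1)) - minz (e (sing 1)) = 0 := by linarith
  have h5 := h X
  simp only [h4] at h5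
  linarith

theorem diam_interval_one : maxz (interval 1) - minz (interval 1) = 1 := by
  have := spans_iff.1 (spans_interval 1)
  rw [this.1, this.2]; simp

theorem diam_map (e : NFin ≃+ NFin) (X : NFin) :
    maxz (e X) - minz (e X) = maxz X - minz X := by
  have h := maxz_sub_minz_map e.symm (e (interval 1))
  rw [e.symm_apply_apply, diam_interval_one] at h
  have hnn : 0 ≤ maxz (e (interval 1)) - minz (e (interval 1)) :=
    sub_nonneg.2 (minz_le (maxz_mem _))
  have h1 := Int.eq_one_of_mul_eq_one_right hnn h.symm
  rw [maxz_sub_minz_map e X, h1, mul_one]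

theorem map_sing (e : NFin ≃+ NFin) (c : ℤ) : e (sing c) = sing (minz (e (sing c))) := by
  have := diam_map e (sing c)
  rw [maxz_sing, minz_sing, sub_self] at this
  exact eq_sing (by linarith)

theorem minz_map_sing_one (e : NFin ≃+ NFin) :
    minz (e (sing 1)) = 1 ∨ minz (e (sing 1)) = -1 := by
  have h := additive_eq (fun X => minz (e.symm X)) (fun X Y => by rw [map_add, minz_add])
    (e (sing 1))
  have hd := diam_map e (sing 1)
  simp only [e.symm_apply_apply, minz_sing, hd, maxz_sing, sub_self, zero_mul, add_zero] at h
  exact Int.isUnit_iff.1 (IsUnit.of_mul_eq_one _ h.symm)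

theorem norm_map_tr (e : NFin ≃+ NFin) (X : NFin) (c : ℤ) :
    norm (e (tr X c)) = norm (e X) := by
  rw [← add_sing, map_add, map_sing e c, add_sing, norm_tr]

theorem isReducedAut (e : NFin ≃+ NFin) :
    IsReducedAut (fun X => norm (e X)) (fun X => norm (e.symm X)) := by
  have hadd : ∀ (e : NFin ≃+ NFin) X Y, norm (e (X + Y)) = norm (e X) + norm (e Y) :=
    fun e X Y => by rw [map_add, norm_add]
  have hspans : ∀ (e : NFin ≃+ NFin) {n X}, Spans n X → Spans n (norm (e X)) := by
    intro e n X h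
    rw [spans_iff] at h ⊢
    refine ⟨minz_norm _, ?_⟩
    have := diam_map e X
    rw [norm, maxz_tr]
    linarith [h.1, h.2]
  have hinv : ∀ (e : NFin ≃+ NFin) {n X}, Spans n X → norm (e.symm (norm (e X))) = X := by
    intro e n X h
    conv_lhs => enter [1, 2]; rw [norm]
    rw [norm_map_tr, e.symm_apply_apply, norm_eq_self (spans_iff.1 h).1]
  exact ⟨hadd e, hadd e.symm, hspans e, hspans e.symm, hinv e, hinv e.symm⟩

theorem spans_norm (X : NFin) : Spans (maxz X - minz X) (norm X) := by
  rw [spans_iff]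
  exact ⟨minz_norm X, by rw [norm, maxz_tr, sub_eq_add_neg]⟩

theorem norm_map_eq (e : NFin ≃+ NFin) :
    (∀ X, norm (e X) = norm X) ∨ (∀ X, norm (e X) = refl (norm X)) := by
  have hn : ∀ X, norm (e X) = norm (e (norm X)) := fun X => (norm_map_tr e X _).symm
  rcases (isReducedAut e).eq_self_or_refl with h | h
  · exact Or.inl fun X => (hn X).trans (h _ _ (spans_norm X))
  · exact Or.inr fun X => (hn X).trans (h _ _ (spans_norm X))

theorem refl_norm (X : NFin) : refl (norm X) = tr (negF X) (maxz X) := by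
  refine ext_mem fun z => ?_
  rw [(spans_norm X).mem_refl, norm, mem_tr, mem_tr, mem_negF]
  ring_nf

theorem negF_tr (X : NFin) (c : ℤ) : negF (tr X c) = tr (negF X) (-c) := by
  refine ext_mem fun z => ?_
  rw [mem_negF, mem_tr, mem_tr, mem_negF]
  ring_nf

theorem exists_eq_of_addEquiv (e : NFin ≃+ NFin) :
    ∃ α : ℤ, ⇑e = fa α ∨ ⇑e = ga α ∨ ⇑e = negF ∘ fa α ∨ ⇑e = negF ∘ ga α := by
  have hmin := additive_eq (fun X => minz (e X)) (fun X Y => by rw [map_add, minz_add])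
  set β := minz (e (interval 1))
  rcases norm_map_eq e with h | h <;> rcases minz_map_sing_one e with hs | hs <;>
    simp only [hs] at hmin
  · refine ⟨-β, Or.inl (funext fun X => ?_)⟩
    rw [← tr_norm (e X), h, hmin, norm, tr_tr, fa]
    congr 1
    ring
  · refine ⟨-β - 1, Or.inr (Or.inl (funext fun X => ?_))⟩
    rw [← tr_norm (e X), h, hmin, norm, tr_tr, ga]
    congr 1
    ring
  · refine ⟨β, Or.inr (Or.inr (Or.inr (funext fun X => ?_)))⟩
    rw [← tr_norm (e X), h, hmin, refl_norm, tr_tr, Function.comp, ga, negF_tr]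
    congr 1
    ring
  · refine ⟨1 + β, Or.inr (Or.inr (Or.inl (funext fun X => ?_)))⟩
    rw [← tr_norm (e X), h, hmin, refl_norm, tr_tr, Function.comp, fa, negF_tr]
    congr 1
    ring

end NFin

/-- Every automorphism of `P_fin(ℤ)` is of the form `±f_α` or `±g_α` for some `α ∈ ℤ`,
and conversely every such map is an automorphism. -/
theorem stmt_0 (φ : NFin → NFin) :
    (Function.Bijective φ ∧ ∀ X Y : NFin, φ (X + Y) = φ X + φ Y) ↔
      ∃ α : ℤ, φ = fa α ∨ φ = ga α ∨ φ = negF ∘ fa α ∨ φ = negF ∘ ga α := by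
  constructor
  · rintro ⟨hbij, hadd⟩
    exact NFin.exists_eq_of_addEquiv (AddEquiv.mk (Equiv.ofBijective φ hbij) hadd)
  · rintro ⟨α, rfl | rfl | rfl | rfl⟩
    · exact ⟨NFin.fa_bijective α, NFin.fa_add α⟩
    · exact ⟨(NFin.ga_involutive α).bijective, NFin.ga_add α⟩
    · refine ⟨NFin.negF_involutive.bijective.comp (NFin.fa_bijective α), fun X Y => ?_⟩
      simp only [Function.comp, NFin.fa_add, NFin.negF_add]
    · refine ⟨NFin.negF_involutive.bijective.comp (NFin.ga_involutive α).bijective, fun X Y => ?_⟩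
      simp only [Function.comp, NFin.ga_add, NFin.negF_add]
end

section
/- If f is a monoid homomorphism from P_fin(ℤ) to the additive group of integers, then there exist integers a and b such that f(X) = a·min X + b·max X for every nonempty finite subset X of ℤ. -/
open Finset Pointwise

/-- The integer interval `[m, M]` as a nonempty finite set. -/
noncomputable def intervalNFin (m M : ℤ) (h : m ≤ M) : NFin := ⟨Finset.Icc m M, Finset.nonempty_Icc.2 h⟩

theorem minz_le_maxz (X : NFin) : minz X ≤ maxz X :=
  Finset.min'_le_max' X.1 X.2

/-- A set and the interval it spans have the same sum with that interval. -/
theorem add_interval_minz_maxz (X : NFin) :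
    X + intervalNFin (minz X) (maxz X) (minz_le_maxz X) =
      intervalNFin (minz X + minz X) (maxz X + maxz X)
        (add_le_add (minz_le_maxz X) (minz_le_maxz X)) := by
  apply Subtype.ext
  change X.1 + Finset.Icc (minz X) (maxz X) =
    Finset.Icc (minz X + minz X) (maxz X + maxz X)
  ext x
  rw [Finset.mem_add, Finset.mem_Icc]
  constructor
  · rintro ⟨y, hy, z, hz, rfl⟩
    have hmin : minz X ≤ y := Finset.min'_le X.1 y hy
    have hmax : y ≤ maxz X := Finset.le_max' X.1 y hy
    rw [Finset.mem_Icc] at hz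
    omega
  · intro hx
    rcases le_total x (minz X + maxz X) with h | h
    · exact ⟨minz X, Finset.min'_mem X.1 X.2, x - minz X,
        Finset.mem_Icc.2 (by omega), by omega⟩
    · exact ⟨maxz X, Finset.max'_mem X.1 X.2, x - maxz X,
        Finset.mem_Icc.2 (by omega), by omega⟩

theorem interval_add_interval (m M p q : ℤ) (h : m ≤ M) (h' : p ≤ q) :
    intervalNFin m M h + intervalNFin p q h' =
      intervalNFin (m + p) (M + q) (add_le_add h h') := by
  apply Subtype.ext
  change Finset.Icc m M + Finset.Icc p q = Finset.Icc (m + p) (M + q)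
  ext x
  simp only [Finset.mem_add, Finset.mem_Icc]
  constructor
  · rintro ⟨y, hy, z, hz, rfl⟩
    omega
  · intro hx
    rcases le_total x (M + p) with hxp | hxp
    · exact ⟨x - p, by omega, p, by omega, by omega⟩
    · exact ⟨M, by omega, x - M, by omega, by omega⟩

theorem hom_eq_hom_interval (f : NFin → ℤ) (hf : ∀ X Y : NFin, f (X + Y) = f X + f Y)
    (X : NFin) :
    f X = f (intervalNFin (minz X) (maxz X) (minz_le_maxz X)) := by
  have h := congrArg f (add_interval_minz_maxz X)
  rw [← interval_add_interval _ _ _ _ (minz_le_maxz X) (minz_le_maxz X), hf, hf] at h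
  exact add_right_cancel h

theorem hom_interval_self (f : NFin → ℤ) (hf : ∀ X Y : NFin, f (X + Y) = f X + f Y)
    (m : ℤ) :
    f (intervalNFin m m le_rfl) = m * f (intervalNFin 1 1 le_rfl) := by
  let φ : ℤ →+ ℤ := AddMonoidHom.mk' (fun m => f (intervalNFin m m le_rfl)) fun m p => by
    rw [← hf, interval_add_interval]
  simpa [φ] using map_zsmul φ m 1

theorem hom_interval (f : NFin → ℤ) (hf : ∀ X Y : NFin, f (X + Y) = f X + f Y)
    (n : ℕ) (m M : ℤ) (h : m ≤ M) (hM : M = m + n) :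
    f (intervalNFin m M h) =
      m * f (intervalNFin 1 1 le_rfl) + n * f (intervalNFin 0 1 zero_le_one) := by
  induction n generalizing M with
  | zero =>
    obtain rfl : M = m := by simpa using hM
    simp [hom_interval_self f hf M]
  | succ n ih =>
    have key := interval_add_interval m (m + n) 0 1 (by omega) zero_le_one
    have hsum : intervalNFin m M h = intervalNFin m (m + n) (by omega) +
        intervalNFin 0 1 zero_le_one := by
      rw [key]
      apply Subtype.ext
      simp only [intervalNFin, hM]
      push_cast
      simp [add_assoc]
    rw [hsum, hf, ih (m + n) (by omega) rfl]
    push_cast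
    ring

/-- Every homomorphism from `P_fin(ℤ)` to `(ℤ,+)` is of the form
`X ↦ a·min X + b·max X` for some integers `a, b`. -/
theorem stmt_2 (f : NFin → ℤ) (hf : ∀ X Y : NFin, f (X + Y) = f X + f Y) :
    ∃ a b : ℤ, ∀ X : NFin, f X = a * minz X + b * maxz X := by
  refine ⟨f (intervalNFin 1 1 le_rfl) - f (intervalNFin 0 1 zero_le_one),
    f (intervalNFin 0 1 zero_le_one), fun X => ?_⟩
  obtain ⟨n, hn⟩ := Int.le.dest (minz_le_maxz X)
  rw [hom_eq_hom_interval f hf X, hom_interval f hf n _ _ _ hn.symm, ← hn]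
  ring
end

section
/- Every automorphism of the monoid P_fin(ℤ) is of the form ε·φ_{α,β} for some integers α, β and some sign ε ∈ {+1, −1}, where φ_{α,β} is the map sending a nonempty finite set X ⊆ ℤ to X + α·min X + β·max X, and (−F)(X) := −F(X) denotes pointwise negation of the output. -/
open Finset Pointwise

/-- `φ_{α,β}(X) = X + α·min X + β·max X`. -/
def phiab (α β : ℤ) (X : NFin) : NFin := tr X (α * minz X + β * maxz X)

/-! ### Minimum, maximum and additive functionals on `NFin` -/

theorem minz_mem (X : NFin) : minz X ∈ X.1 := X.1.min'_mem X.2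

theorem maxz_mem (X : NFin) : maxz X ∈ X.1 := X.1.max'_mem X.2

theorem minz_le {X : NFin} {x : ℤ} (hx : x ∈ X.1) : minz X ≤ x := X.1.min'_le x hx

theorem le_maxz {X : NFin} {x : ℤ} (hx : x ∈ X.1) : x ≤ maxz X := X.1.le_max' x hx

theorem minz_eq {X : NFin} {m : ℤ} (hm : m ∈ X.1) (h : ∀ x ∈ X.1, m ≤ x) : minz X = m :=
  le_antisymm (minz_le hm) (h _ (minz_mem X))

theorem maxz_eq {X : NFin} {m : ℤ} (hm : m ∈ X.1) (h : ∀ x ∈ X.1, x ≤ m) : maxz X = m :=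
  le_antisymm (h _ (maxz_mem X)) (le_maxz hm)

theorem NFin.coe_add (X Y : NFin) : (X + Y).1 = X.1 + Y.1 := rfl

theorem minz_add (X Y : NFin) : minz (X + Y) = minz X + minz Y := by
  apply minz_eq
  · exact Finset.add_mem_add (minz_mem X) (minz_mem Y)
  · intro z hz
    obtain ⟨x, hx, y, hy, rfl⟩ := Finset.mem_add.1 hz
    exact add_le_add (minz_le hx) (minz_le hy)

theorem maxz_add (X Y : NFin) : maxz (X + Y) = maxz X + maxz Y := by
  apply maxz_eq
  · exact Finset.add_mem_add (maxz_mem X) (maxz_mem Y)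
  · intro z hz
    obtain ⟨x, hx, y, hy, rfl⟩ := Finset.mem_add.1 hz
    exact add_le_add (le_maxz hx) (le_maxz hy)

theorem mem_tr {X : NFin} {c z : ℤ} : z ∈ (tr X c).1 ↔ z - c ∈ X.1 := by
  simp only [tr, Finset.mem_image]
  constructor
  · rintro ⟨x, hx, rfl⟩
    simpa using hx
  · intro h
    exact ⟨_, h, by ring⟩

/-- The integer interval `[p, p + n]`. -/
noncomputable def seg (p : ℤ) (n : ℕ) : NFin := ⟨Finset.Icc p (p + n), ⟨p, by simp⟩⟩

theorem mem_seg {p z : ℤ} {n : ℕ} : z ∈ (seg p n).1 ↔ p ≤ z ∧ z ≤ p + n := Finset.mem_Icc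

theorem mem_seg_zero {p z : ℤ} : z ∈ (seg p 0).1 ↔ z = p := by
  rw [mem_seg]
  push_cast
  omega

theorem tr_eq_add (X : NFin) (c : ℤ) : tr X c = X + seg c 0 := by
  apply Subtype.ext
  ext z
  rw [mem_tr, NFin.coe_add, Finset.mem_add]
  constructor
  · intro h
    exact ⟨_, h, c, mem_seg_zero.2 rfl, by ring⟩
  · rintro ⟨x, hx, y, hy, rfl⟩
    rw [mem_seg_zero] at hy
    subst hy
    simpa using hx

theorem seg_add_seg_one (p : ℤ) (n : ℕ) : seg p n + seg 0 1 = seg p (n + 1) := by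
  apply Subtype.ext
  ext z
  rw [NFin.coe_add, Finset.mem_add]
  simp only [mem_seg]
  push_cast
  constructor
  · rintro ⟨x, hx, y, hy, rfl⟩
    omega
  · intro h
    by_cases hz : z ≤ p + n
    · exact ⟨z, by omega, 0, by omega, by ring⟩
    · exact ⟨z - 1, by omega, 1, by omega, by ring⟩

theorem add_seg_eq_seg (X : NFin) {n : ℕ} (hn : (n : ℤ) = maxz X - minz X) :
    X + seg 0 n = seg (minz X) (n + n) := by
  apply Subtype.ext
  ext z
  rw [NFin.coe_add, Finset.mem_add]
  simp only [mem_seg]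
  push_cast
  constructor
  · rintro ⟨x, hx, y, hy, rfl⟩
    have := minz_le hx
    have := le_maxz hx
    omega
  · intro h
    by_cases hz : z ≤ minz X + n
    · exact ⟨minz X, minz_mem X, z - minz X, by omega, by ring⟩
    · exact ⟨maxz X, maxz_mem X, z - maxz X, by omega, by ring⟩

/-- Every additive functional on `NFin` is a linear combination of `minz` and `maxz`. -/
theorem additive_eq_minz_maxz (c : NFin → ℤ) (hc : ∀ X Y, c (X + Y) = c X + c Y) (X : NFin) :
    c X = minz X * c (seg 1 0) + (maxz X - minz X) * c (seg 0 1) := by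
  have hseg0 : ∀ p : ℤ, c (seg p 0) = p * c (seg 1 0) := by
    let f : ℤ →+ ℤ := AddMonoidHom.mk' (fun p => c (seg p 0)) fun p q => by
      rw [← hc, ← tr_eq_add]
      congr 1
      apply Subtype.ext
      ext z
      rw [mem_tr, mem_seg_zero, mem_seg_zero]
      omega
    intro p
    have h := map_zsmul f p 1
    rwa [smul_eq_mul, smul_eq_mul, mul_one] at h
  have hseg : ∀ (p : ℤ) (n : ℕ), c (seg p n) = p * c (seg 1 0) + n * c (seg 0 1) := by
    intro p n
    induction n with
    | zero => rw [hseg0, Nat.cast_zero, zero_mul, add_zero]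
    | succ n ih =>
      rw [← seg_add_seg_one, hc, ih]
      push_cast
      ring
  have hle : minz X ≤ maxz X := minz_le (maxz_mem X)
  obtain ⟨n, hn⟩ := Int.eq_ofNat_of_zero_le (sub_nonneg.2 hle)
  have h := congrArg c (add_seg_eq_seg X hn.symm)
  rw [hc, hseg 0 n, hseg (minz X) (n + n)] at h
  push_cast at h
  rw [hn]
  linarith

/-! ### Finite sets with minimum `0` and maximum `M` -/

/-- `X` has minimum `0` and maximum `M`. -/
structure Spans (M : ℤ) (X : Finset ℤ) : Prop where
  zero_mem : 0 ∈ X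
  max_mem : M ∈ X
  bounds : ∀ x ∈ X, 0 ≤ x ∧ x ≤ M

namespace Spans

theorem nonneg {M : ℤ} {X : Finset ℤ} (h : Spans M X) : 0 ≤ M := (h.bounds _ h.max_mem).1

theorem add {M N : ℤ} {X Y : Finset ℤ} (hX : Spans M X) (hY : Spans N Y) :
    Spans (M + N) (X + Y) where
  zero_mem := by simpa using Finset.add_mem_add hX.zero_mem hY.zero_mem
  max_mem := Finset.add_mem_add hX.max_mem hY.max_mem
  bounds z hz := by
    obtain ⟨x, hx, y, hy, rfl⟩ := Finset.mem_add.1 hz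
    have := hX.bounds x hx
    have := hY.bounds y hy
    omega

theorem icc {M : ℤ} (hM : 0 ≤ M) : Spans M (Finset.Icc 0 M) where
  zero_mem := by simpa
  max_mem := by simpa
  bounds z hz := Finset.mem_Icc.1 hz

theorem subset_icc {M : ℤ} {X : Finset ℤ} (h : Spans M X) : X ⊆ Finset.Icc 0 M :=
  fun x hx => Finset.mem_Icc.2 (h.bounds x hx)

theorem pair {M : ℤ} (hM : 0 ≤ M) : Spans M {0, M} where
  zero_mem := by simp
  max_mem := by simp
  bounds z hz := by
    simp only [Finset.mem_insert, Finset.mem_singleton] at hz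
    omega

theorem triple {a b : ℤ} (ha : 0 < a) (hb : 0 < b) : Spans (a + b) {0, a, a + b} where
  zero_mem := by simp
  max_mem := by simp
  bounds z hz := by
    simp only [Finset.mem_insert, Finset.mem_singleton] at hz
    omega

theorem icc_erase {M a : ℤ} (h0 : 0 < a) (hM : a < M) : Spans M ((Finset.Icc 0 M).erase a) where
  zero_mem := by
    simp only [Finset.mem_erase, Finset.mem_Icc]
    omega
  max_mem := by
    simp only [Finset.mem_erase, Finset.mem_Icc]
    omega
  bounds z hz := by
    simp only [Finset.mem_erase, Finset.mem_Icc] at hz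
    omega

theorem subset_icc_erase_iff {M a : ℤ} {X : Finset ℤ} (h : Spans M X) :
    X ⊆ (Finset.Icc 0 M).erase a ↔ a ∉ X := by
  rw [Finset.subset_erase]
  exact ⟨fun h' => h'.2, fun h' => ⟨h.subset_icc, h'⟩⟩

end Spans

/-- Inclusion between sets spanning `[0, M]` is detected by the sums that fill an interval. -/
theorem subset_iff_forall_add_eq_icc {M : ℤ} {X X' : Finset ℤ} (hX : Spans M X)
    (hX' : Spans M X') :
    X ⊆ X' ↔ ∀ N Y, Spans N Y → X + Y = Finset.Icc 0 (M + N) →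
      X' + Y = Finset.Icc 0 (M + N) := by
  constructor
  · intro h N Y hY hXY
    apply (hX'.add hY).subset_icc.antisymm
    rw [← hXY]
    exact Finset.add_subset_add_right h
  · intro h
    by_contra hsub
    obtain ⟨x₀, hx₀, hx₀'⟩ := Finset.not_subset.1 hsub
    have hM := hX.nonneg
    let Y : Finset ℤ := (Finset.Icc 0 (4 * M + 4)).filter fun y => 2 * M + 1 - y ∉ X'
    have memY : ∀ y, y ∈ Y ↔ (0 ≤ y ∧ y ≤ 4 * M + 4) ∧ 2 * M + 1 - y ∉ X' := by
      intro y
      simp [Y]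
    have out : ∀ z, z < 0 ∨ M < z → z ∉ X' := by
      intro z hz hz'
      have := hX'.bounds z hz'
      omega
    have hY : Spans (4 * M + 4) Y :=
      { zero_mem := (memY _).2 ⟨by omega, out _ (by omega)⟩
        max_mem := (memY _).2 ⟨by omega, out _ (by omega)⟩
        bounds := fun z hz => ((memY z).1 hz).1 }
    have hfull : X + Y = Finset.Icc 0 (M + (4 * M + 4)) := by
      apply (hX.add hY).subset_icc.antisymm
      intro u hu
      rw [Finset.mem_Icc] at hu
      have key : ∀ x ∈ X, (0 ≤ u - x ∧ u - x ≤ 4 * M + 4) → 2 * M + 1 - (u - x) ∉ X' →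
          u ∈ X + Y := fun x hx h₁ h₂ =>
        Finset.mem_add.2 ⟨x, hx, u - x, (memY _).2 ⟨h₁, h₂⟩, by ring⟩
      have hb := hX.bounds x₀ hx₀
      rcases lt_trichotomy u (2 * M + 1) with hlt | rfl | hgt
      · by_cases hu' : u < M
        · exact key 0 hX.zero_mem (by omega) (out _ (by omega))
        · exact key M hX.max_mem (by omega) (out _ (by omega))
      · refine key x₀ hx₀ (by omega) ?_
        rwa [sub_sub_cancel]
      · by_cases hu' : u ≤ 4 * M + 4
        · exact key 0 hX.zero_mem (by omega) (out _ (by omega))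
        · exact key M hX.max_mem (by omega) (out _ (by omega))
    have hmem : 2 * M + 1 ∈ X' + Y := by
      rw [h _ Y hY hfull, Finset.mem_Icc]
      omega
    obtain ⟨x, hx, y, hy, hxy⟩ := Finset.mem_add.1 hmem
    apply ((memY y).1 hy).2
    rwa [← hxy, add_sub_cancel_right]

theorem icc_erase_add_pair_eq_icc_iff {M a d : ℤ} (h0 : 0 < a) (hM : a < M) (hd : 0 < d)
    (hdM : d ≤ M) :
    (Finset.Icc 0 M).erase a + {0, d} = Finset.Icc 0 (M + d) ↔ d ≤ a ∧ d ≤ M - a := by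
  have mem : ∀ z, z ∈ (Finset.Icc 0 M).erase a + {0, d} ↔
      (z ≠ a ∧ 0 ≤ z ∧ z ≤ M) ∨ (z - d ≠ a ∧ 0 ≤ z - d ∧ z - d ≤ M) := by
    intro z
    simp only [Finset.mem_add, Finset.mem_erase, Finset.mem_Icc, Finset.mem_insert,
      Finset.mem_singleton]
    constructor
    · rintro ⟨x, hx, y, rfl | rfl, rfl⟩ <;> omega
    · rintro (h | h)
      · exact ⟨z, h, 0, by simp, by ring⟩
      · exact ⟨z - d, h, d, by simp, by ring⟩
  rw [Finset.ext_iff]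
  simp only [mem, Finset.mem_Icc]
  constructor
  · intro h
    have h₁ := h a
    have h₂ := h (a + d)
    omega
  · intro h z
    omega

/-! ### Automorphisms of the monoid of sets with minimum `0` -/

/-- `ψ` acts as an automorphism, preserving the maximum, on the finite sets with minimum `0`. -/
structure IsSpanAut (ψ : Finset ℤ → Finset ℤ) : Prop where
  spans : ∀ {M X}, Spans M X → Spans M (ψ X)
  map_add : ∀ {M N X Y}, Spans M X → Spans N Y → ψ (X + Y) = ψ X + ψ Y
  surj : ∀ {M Y}, Spans M Y → ∃ X, Spans M X ∧ ψ X = Y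
  inj : ∀ {M X Y}, Spans M X → Spans M Y → ψ X = ψ Y → X = Y

namespace IsSpanAut

variable {ψ : Finset ℤ → Finset ℤ}

theorem map_icc (h : IsSpanAut ψ) {M : ℤ} (hM : 0 ≤ M) : ψ (Finset.Icc 0 M) = Finset.Icc 0 M := by
  have small : ∀ {K X}, K ≤ 1 → Spans K X → X = Finset.Icc 0 K := by
    intro K X hK hX
    apply hX.subset_icc.antisymm
    intro z hz
    rw [Finset.mem_Icc] at hz
    obtain rfl | rfl : z = 0 ∨ z = K := by omega
    · exact hX.zero_mem
    · exact hX.max_mem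
  induction M, hM using Int.leInduction with
  | base => exact small (by norm_num) (h.spans (Spans.icc le_rfl))
  | succ n hn ih =>
    have hsum : Finset.Icc 0 (n + 1) = Finset.Icc 0 n + Finset.Icc (0 : ℤ) 1 := by
      ext z
      simp only [Finset.mem_add, Finset.mem_Icc]
      constructor
      · intro hz
        by_cases hz' : z ≤ n
        · exact ⟨z, by omega, 0, by omega, by ring⟩
        · exact ⟨z - 1, by omega, 1, by omega, by ring⟩
      · rintro ⟨x, hx, y, hy, rfl⟩
        omega
    have h1 := Spans.icc (M := 1) (by norm_num)
    rw [hsum, h.map_add (Spans.icc hn) h1, ih, small le_rfl (h.spans h1)]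

theorem add_eq_icc_iff (h : IsSpanAut ψ) {M N : ℤ} {X Y : Finset ℤ} (hX : Spans M X)
    (hY : Spans N Y) :
    ψ X + ψ Y = Finset.Icc 0 (M + N) ↔ X + Y = Finset.Icc 0 (M + N) := by
  have hMN := add_nonneg hX.nonneg hY.nonneg
  rw [← h.map_add hX hY]
  constructor
  · intro h'
    apply h.inj (hX.add hY) (Spans.icc hMN)
    rw [h', h.map_icc hMN]
  · intro h'
    rw [h', h.map_icc hMN]

theorem subset_iff (h : IsSpanAut ψ) {M : ℤ} {X X' : Finset ℤ} (hX : Spans M X)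
    (hX' : Spans M X') : ψ X ⊆ ψ X' ↔ X ⊆ X' := by
  rw [subset_iff_forall_add_eq_icc hX hX',
    subset_iff_forall_add_eq_icc (h.spans hX) (h.spans hX')]
  constructor
  · intro H N Y hY
    rw [← h.add_eq_icc_iff hX hY, ← h.add_eq_icc_iff hX' hY]
    exact H N _ (h.spans hY)
  · intro H N Y hY
    obtain ⟨Y, hY', rfl⟩ := h.surj hY
    rw [h.add_eq_icc_iff hX hY', h.add_eq_icc_iff hX' hY']
    exact H N Y hY'

theorem map_pair (h : IsSpanAut ψ) {M : ℤ} (hM : 0 ≤ M) : ψ {0, M} = {0, M} := by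
  have hp := Spans.pair hM
  have min_pair : ∀ {Z}, Spans M Z → {0, M} ⊆ Z := by
    intro Z hZ z hz
    simp only [Finset.mem_insert, Finset.mem_singleton] at hz
    obtain rfl | rfl := hz
    · exact hZ.zero_mem
    · exact hZ.max_mem
  obtain ⟨Z, hZ, hψZ⟩ := h.surj hp
  apply Finset.Subset.antisymm _ (min_pair (h.spans hp))
  exact ((h.subset_iff hp hZ).2 (min_pair hZ)).trans hψZ.subset

theorem map_icc_erase (h : IsSpanAut ψ) {a b : ℤ} (ha : 0 < a) (hb : 0 < b) :
    ψ ((Finset.Icc 0 (a + b)).erase a) = (Finset.Icc 0 (a + b)).erase a ∨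
      ψ ((Finset.Icc 0 (a + b)).erase a) = (Finset.Icc 0 (a + b)).erase b := by
  have hM : 0 ≤ a + b := by omega
  have hK := Spans.icc_erase (M := a + b) ha (by omega)
  have hne : ∀ {W}, Spans (a + b) W → ∀ {x}, x ∉ ψ W → 0 ≤ x → x ≤ a + b →
      ∃ y, 0 ≤ y ∧ y ≤ a + b ∧ y ∉ W := by
    intro W hW x hx hx0 hxM
    by_contra! hall
    have : W = Finset.Icc 0 (a + b) :=
      hW.subset_icc.antisymm fun z hz => hall z (Finset.mem_Icc.1 hz).1 (Finset.mem_Icc.1 hz).2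
    rw [this, h.map_icc hM, Finset.mem_Icc] at hx
    exact hx ⟨hx0, hxM⟩
  obtain ⟨a', ha', haM', hmem⟩ : ∃ y, 0 ≤ y ∧ y ≤ a + b ∧
      y ∉ ψ ((Finset.Icc 0 (a + b)).erase a) := by
    by_contra! hall
    have hfull : ψ ((Finset.Icc 0 (a + b)).erase a) = ψ (Finset.Icc 0 (a + b)) := by
      rw [h.map_icc hM]
      exact (h.spans hK).subset_icc.antisymm fun z hz =>
        hall z (Finset.mem_Icc.1 hz).1 (Finset.mem_Icc.1 hz).2
    have := h.inj hK (Spans.icc hM) hfull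
    rw [Finset.erase_eq_self, Finset.mem_Icc] at this
    omega
  have h0 : a' ≠ 0 := by
    rintro rfl
    exact hmem (h.spans hK).zero_mem
  have h1 : a' ≠ a + b := by
    rintro rfl
    exact hmem (h.spans hK).max_mem
  have hK' := Spans.icc_erase (M := a + b) (a := a') (by omega) (by omega)
  obtain ⟨W, hW, hψW⟩ := h.surj hK'
  have hKW : (Finset.Icc 0 (a + b)).erase a ⊆ W := by
    rw [← h.subset_iff hK hW, hψW, (h.spans hK).subset_icc_erase_iff]
    exact hmem
  obtain ⟨y, hy0, hyM, hyW⟩ := hne hW (x := a') (by simp [hψW]) ha' haM'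
  have hya : y = a := by
    by_contra hya
    exact hyW (hKW (Finset.mem_erase.2 ⟨hya, Finset.mem_Icc.2 ⟨hy0, hyM⟩⟩))
  have hWK : W = (Finset.Icc 0 (a + b)).erase a :=
    (hW.subset_icc_erase_iff.2 (hya ▸ hyW)).antisymm hKW
  have hd : ∀ d, 0 < d → d ≤ a + b →
      ((d ≤ a' ∧ d ≤ a + b - a') ↔ (d ≤ a ∧ d ≤ a + b - a)) := by
    intro d hd hdM
    rw [← icc_erase_add_pair_eq_icc_iff (by omega) (by omega) hd hdM,
      ← icc_erase_add_pair_eq_icc_iff (by omega) (by omega) hd hdM,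
      ← h.add_eq_icc_iff hK (Spans.pair hd.le), h.map_pair hd.le, ← hWK, hψW]
  have e1 := hd a ha (by omega)
  have e2 := hd b hb (by omega)
  have e3 := hd a' (by omega) (by omega)
  have e4 := hd (a + b - a') (by omega) (by omega)
  rw [hWK] at hψW
  obtain rfl | rfl : a' = a ∨ a' = b := by omega
  · exact Or.inl hψW
  · exact Or.inr hψW

theorem mem_iff_of_map_icc_erase (h : IsSpanAut ψ) {M a a' : ℤ} (h0 : 0 < a) (hM : a < M)
    (hψ : ψ ((Finset.Icc 0 M).erase a) = (Finset.Icc 0 M).erase a') {X : Finset ℤ}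
    (hX : Spans M X) : a' ∈ ψ X ↔ a ∈ X := by
  have h' := h.subset_iff hX (Spans.icc_erase h0 hM)
  rw [hψ, (h.spans hX).subset_icc_erase_iff, hX.subset_icc_erase_iff] at h'
  exact not_iff_not.1 h'

/-- `ψ` sends the coatom omitting `a` to the one omitting `b`, among the sets with maximum
`a + b`. -/
def Flips (ψ : Finset ℤ → Finset ℤ) (a b : ℤ) : Prop :=
  ψ ((Finset.Icc 0 (a + b)).erase a) = (Finset.Icc 0 (a + b)).erase b

theorem mem_iff_of_flips (h : IsSpanAut ψ) {a b : ℤ} (ha : 0 < a) (hb : 0 < b)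
    (hf : Flips ψ a b) {X : Finset ℤ} (hX : Spans (a + b) X) : b ∈ ψ X ↔ a ∈ X :=
  h.mem_iff_of_map_icc_erase ha (by omega) hf hX

theorem mem_iff_of_not_flips (h : IsSpanAut ψ) {a b : ℤ} (ha : 0 < a) (hb : 0 < b)
    (hf : ¬ Flips ψ a b) {X : Finset ℤ} (hX : Spans (a + b) X) : a ∈ ψ X ↔ a ∈ X :=
  h.mem_iff_of_map_icc_erase ha (by omega) ((h.map_icc_erase ha hb).resolve_right hf) hX

theorem Flips.symm (h : IsSpanAut ψ) {a b : ℤ} (ha : 0 < a) (hb : 0 < b) (hf : Flips ψ a b) :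
    Flips ψ b a := by
  by_contra hf'
  have hb' := (h.map_icc_erase hb ha).resolve_right hf'
  have hK := Spans.icc_erase (M := a + b) ha (by omega)
  have hK' := Spans.icc_erase (M := a + b) hb (by omega)
  rw [add_comm b a] at hb'
  have heq := h.inj hK hK' (hf.trans hb'.symm)
  have hab : a = b := by
    by_contra hab
    have : a ∈ (Finset.Icc 0 (a + b)).erase a := by
      rw [heq, Finset.mem_erase, Finset.mem_Icc]
      omega
    simp at this
  subst hab
  exact hf' hf

theorem flips_comm (h : IsSpanAut ψ) {a b : ℤ} (ha : 0 < a) (hb : 0 < b) :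
    Flips ψ a b ↔ Flips ψ b a :=
  ⟨Flips.symm h ha hb, Flips.symm h hb ha⟩

/-- The image of `{0, a, a + b}` is contained in `{0, b, a + b}` or in `{0, a, a + b}`, according
to whether `ψ` flips `a` and `b`. -/
theorem mem_map_triple (h : IsSpanAut ψ) {a b x : ℤ} (ha : 0 < a) (hb : 0 < b)
    (hx : x ∈ ψ {0, a, a + b}) :
    x = 0 ∨ x = a + b ∨ (x = b ∧ Flips ψ a b) ∨ (x = a ∧ ¬ Flips ψ a b) := by
  have hT := Spans.triple ha hb
  have hbd := (h.spans hT).bounds x hx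
  by_cases h0 : x = 0
  · exact Or.inl h0
  by_cases h1 : x = a + b
  · exact Or.inr (Or.inl h1)
  refine Or.inr (Or.inr ?_)
  have hsum : x + (a + b - x) = a + b := by ring
  have hsum' : a + b - x + x = a + b := by ring
  have hT' : Spans (x + (a + b - x)) {0, a, a + b} := by rwa [hsum]
  have hT'' : Spans (a + b - x + x) {0, a, a + b} := by rwa [hsum']
  by_cases hf : Flips ψ x (a + b - x)
  · have hf' := Flips.symm h (by omega) (by omega) hf
    have := (h.mem_iff_of_flips (by omega) (by omega) hf' hT'').1 hx
    simp only [Finset.mem_insert, Finset.mem_singleton] at this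
    have hxb : x = b := by omega
    subst hxb
    rw [add_sub_cancel_right] at hf'
    exact Or.inl ⟨rfl, hf'⟩
  · have := (h.mem_iff_of_not_flips (by omega) (by omega) hf hT').1 hx
    simp only [Finset.mem_insert, Finset.mem_singleton] at this
    have hxa : x = a := by omega
    subst hxa
    rw [add_sub_cancel_left] at hf
    exact Or.inr ⟨rfl, hf⟩

theorem flips_add_iff (h : IsSpanAut ψ) {a b c : ℤ} (ha : 0 < a) (hb : 0 < b) (hc : 0 < c)
    (hab : a ≠ b) (hac : a ≠ c) (habc : a ≠ b + c) : Flips ψ a (b + c) ↔ Flips ψ a b := by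
  have hT := Spans.triple ha hb
  have hS := hT.add (Spans.pair hc.le)
  rw [add_assoc] at hS
  have haS : a ∈ ({0, a, a + b} : Finset ℤ) + {0, c} :=
    Finset.mem_add.2 ⟨a, by simp, 0, by simp, by ring⟩
  have memS : ∀ z ∈ ψ ({0, a, a + b} + {0, c}), ∃ x, (z = x ∨ z = x + c) ∧
      (x = 0 ∨ x = a + b ∨ (x = b ∧ Flips ψ a b) ∨ (x = a ∧ ¬ Flips ψ a b)) := by
    intro z hz
    rw [h.map_add hT (Spans.pair hc.le), h.map_pair hc.le] at hz
    obtain ⟨x, hx, y, hy, rfl⟩ := Finset.mem_add.1 hz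
    refine ⟨x, ?_, h.mem_map_triple ha hb hx⟩
    simp only [Finset.mem_insert, Finset.mem_singleton] at hy
    obtain rfl | rfl := hy <;> simp
  constructor
  · intro hf
    by_contra hf'
    obtain ⟨x, hx, hx'⟩ := memS _ ((h.mem_iff_of_flips ha (by omega) hf hS).2 haS)
    simp only [hf', and_false, false_or, not_false_eq_true, and_true] at hx'
    omega
  · intro hf'
    by_contra hf
    obtain ⟨x, hx, hx'⟩ := memS _ ((h.mem_iff_of_not_flips ha (by omega) hf hS).2 haS)
    simp only [hf', not_true_eq_false, and_false, or_false, and_true] at hx'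
    omega

theorem flips_iff_of_lt (h : IsSpanAut ψ) {a x y : ℤ} (ha : 0 < a) (hx : 0 < x) (hxy : x < y)
    (hax : a ≠ x) (hay : a ≠ y) (hayx : a ≠ y - x) : Flips ψ a y ↔ Flips ψ a x := by
  have := h.flips_add_iff ha hx (sub_pos.2 hxy) hax hayx (by omega)
  rwa [add_sub_cancel] at this

theorem flips_iff (h : IsSpanAut ψ) {a b : ℤ} (ha : 0 < a) (hb : 0 < b) (hab : a ≠ b) :
    Flips ψ a b ↔ Flips ψ 1 2 := by
  have one : ∀ x, 2 ≤ x → (Flips ψ 1 x ↔ Flips ψ 1 2) := by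
    intro x hx
    have far : ∀ y, 4 ≤ y → (Flips ψ 1 y ↔ Flips ψ 1 2) := fun y hy =>
      h.flips_iff_of_lt one_pos two_pos (by omega) (by omega) (by omega) (by omega)
    rw [← far (x + 2) (by omega)]
    exact (h.flips_iff_of_lt one_pos (by omega) (by omega) (by omega) (by omega)
      (by omega)).symm
  have gen : ∀ a b, 2 ≤ a → 2 ≤ b → a ≠ b → b ≠ a + 1 → (Flips ψ a b ↔ Flips ψ 1 2) := by
    intro a b ha hb hab hab'
    rw [h.flips_iff_of_lt (x := 1) (by omega) one_pos (by omega) (by omega) hab (by omega),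
      h.flips_comm (by omega) one_pos, one a ha]
  by_cases ha1 : a = 1
  · subst ha1
    exact one b (by omega)
  by_cases hb1 : b = 1
  · subst hb1
    rw [h.flips_comm ha hb]
    exact one a (by omega)
  by_cases hab' : b = a + 1
  · rw [h.flips_comm ha hb]
    exact gen b a (by omega) (by omega) (by omega) (by omega)
  · exact gen a b (by omega) (by omega) hab hab'

/-- The only automorphisms are the identity and the reflection. -/
theorem eq_id_or_reflection (h : IsSpanAut ψ) :
    (∀ M X, Spans M X → ∀ z, z ∈ ψ X ↔ z ∈ X) ∨
      (∀ M X, Spans M X → ∀ z, z ∈ ψ X ↔ M - z ∈ X) := by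
  by_cases hf : Flips ψ 1 2
  · right
    intro M X hX z
    have hψX := h.spans hX
    by_cases hz : 0 < z ∧ z < M
    · have hX' : Spans (M - z + z) X := by rwa [sub_add_cancel]
      by_cases hmid : M - z = z
      · by_cases hf' : Flips ψ (M - z) z
        · exact h.mem_iff_of_flips (by omega) (by omega) hf' hX'
        · have := h.mem_iff_of_not_flips (by omega) (by omega) hf' hX'
          rwa [hmid] at this ⊢
      · exact h.mem_iff_of_flips (by omega) (by omega)
          ((h.flips_iff (by omega) (by omega) hmid).2 hf) hX'
    · by_cases h0 : z = 0
      · subst h0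
        simp [hψX.zero_mem, hX.max_mem]
      · by_cases h1 : z = M
        · subst h1
          simp [hψX.max_mem, hX.zero_mem]
        · constructor <;> intro hmem
          · have := hψX.bounds _ hmem
            omega
          · have := hX.bounds _ hmem
            omega
  · left
    intro M X hX z
    have hψX := h.spans hX
    by_cases hz : 0 < z ∧ z < M
    · have hX' : Spans (z + (M - z)) X := by rwa [add_sub_cancel]
      by_cases hmid : z = M - z
      · by_cases hf' : Flips ψ z (M - z)
        · have := h.mem_iff_of_flips (by omega) (by omega) hf' hX'
          rwa [← hmid] at this
        · exact h.mem_iff_of_not_flips (by omega) (by omega) hf' hX'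
      · exact h.mem_iff_of_not_flips (by omega) (by omega)
          (fun hf' => hf ((h.flips_iff (by omega) (by omega) hmid).1 hf')) hX'
    · by_cases h0 : z = 0
      · subst h0
        simp [hψX.zero_mem, hX.zero_mem]
      · by_cases h1 : z = M
        · subst h1
          simp [hψX.max_mem, hX.max_mem]
        · constructor <;> intro hmem
          · have := hψX.bounds _ hmem
            omega
          · have := hX.bounds _ hmem
            omega

end IsSpanAut

/-! ### Reduction to sets with minimum `0` -/

theorem minz_tr (X : NFin) (c : ℤ) : minz (tr X c) = minz X + c := by
  rw [tr_eq_add, minz_add]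
  congr 1
  exact minz_eq (mem_seg_zero.2 rfl) fun x hx => (mem_seg_zero.1 hx).ge

/-- The translate of `X` with minimum `0`. -/
def shiftToZero (X : NFin) : NFin := tr X (-minz X)

theorem mem_shiftToZero {X : NFin} {z : ℤ} : z ∈ (shiftToZero X).1 ↔ z + minz X ∈ X.1 := by
  rw [shiftToZero, mem_tr, sub_neg_eq_add]

theorem spans_shiftToZero (X : NFin) : Spans (maxz X - minz X) (shiftToZero X).1 where
  zero_mem := by
    rw [mem_shiftToZero, zero_add]
    exact minz_mem X
  max_mem := by
    rw [mem_shiftToZero, sub_add_cancel]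
    exact maxz_mem X
  bounds z hz := by
    rw [mem_shiftToZero] at hz
    have := minz_le hz
    have := le_maxz hz
    omega

theorem Spans.minz_eq {M : ℤ} {X : NFin} (h : Spans M X.1) : minz X = 0 :=
  _root_.minz_eq h.zero_mem fun x hx => (h.bounds x hx).1

theorem Spans.maxz_eq {M : ℤ} {X : NFin} (h : Spans M X.1) : maxz X = M :=
  _root_.maxz_eq h.max_mem fun x hx => (h.bounds x hx).2

theorem shiftToZero_eq_self {X : NFin} (h : minz X = 0) : shiftToZero X = X := by
  apply Subtype.ext
  ext z
  rw [mem_shiftToZero, h, add_zero]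

theorem shiftToZero_add (X Y : NFin) : shiftToZero (X + Y) = shiftToZero X + shiftToZero Y := by
  apply Subtype.ext
  ext z
  rw [mem_shiftToZero, NFin.coe_add, NFin.coe_add, Finset.mem_add, Finset.mem_add, minz_add]
  constructor
  · rintro ⟨x, hx, y, hy, hxy⟩
    refine ⟨x - minz X, ?_, y - minz Y, ?_, by omega⟩ <;> rw [mem_shiftToZero, sub_add_cancel] <;>
      assumption
  · rintro ⟨x, hx, y, hy, rfl⟩
    exact ⟨_, mem_shiftToZero.1 hx, _, mem_shiftToZero.1 hy, by ring⟩

theorem shiftToZero_tr (X : NFin) (c : ℤ) : shiftToZero (tr X c) = shiftToZero X := by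
  apply Subtype.ext
  ext z
  rw [mem_shiftToZero, mem_shiftToZero, mem_tr, minz_tr, add_sub_assoc, add_sub_cancel_right]

theorem eq_tr_shiftToZero (X : NFin) : X = tr (shiftToZero X) (minz X) := by
  apply Subtype.ext
  ext z
  rw [mem_tr, mem_shiftToZero, sub_add_cancel]

theorem eq_seg_of_minz_eq_maxz {X : NFin} (h : maxz X = minz X) : X = seg (minz X) 0 := by
  apply Subtype.ext
  ext z
  rw [mem_seg_zero]
  constructor
  · intro hz
    have := minz_le hz
    have := le_maxz hz
    omega
  · rintro rfl
    exact minz_mem X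

section Automorphism

variable {φ : NFin → NFin}

theorem width_map (hφ : Function.Surjective φ) (hadd : ∀ X Y : NFin, φ (X + Y) = φ X + φ Y)
    (X : NFin) : maxz (φ X) - minz (φ X) = maxz X - minz X := by
  let w : NFin → ℤ := fun X => maxz (φ X) - minz (φ X)
  have hw : ∀ X, w X = minz X * w (seg 1 0) + (maxz X - minz X) * w (seg 0 1) :=
    additive_eq_minz_maxz w fun X Y => by
      simp only [w, hadd, maxz_add, minz_add]
      ring
  have hw0 : ∀ X, 0 ≤ w X := fun X => sub_nonneg.2 (minz_le (maxz_mem _))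
  have hmin : ∀ p n, minz (seg p n) = p := fun p n =>
    minz_eq (mem_seg.2 ⟨le_rfl, by omega⟩) fun x hx => (mem_seg.1 hx).1
  have hmax : ∀ p n, maxz (seg p n) = p + n := fun p n =>
    maxz_eq (mem_seg.2 ⟨by omega, le_rfl⟩) fun x hx => (mem_seg.1 hx).2
  have hone : w (seg 1 0) = 0 := by
    have h := hw (seg (-1) 0)
    rw [hmin, hmax] at h
    have h1 := hw0 (seg (-1) 0)
    have h2 := hw0 (seg 1 0)
    push_cast at h
    linarith
  have hw' : ∀ X, w X = (maxz X - minz X) * w (seg 0 1) := fun X => by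
    rw [hw X, hone]
    ring
  obtain ⟨Z, hZ⟩ := hφ (seg 0 1)
  have h1 : (maxz Z - minz Z) * w (seg 0 1) = 1 := by
    rw [← hw']
    simp only [w, hZ, hmin, hmax]
    norm_num
  have hk : w (seg 0 1) = 1 := by
    rcases Int.isUnit_iff.1 (IsUnit.of_mul_eq_one_right _ h1) with h | h
    · exact h
    · have := hw0 (seg 0 1)
      omega
  have := hw' X
  rwa [hk, mul_one] at this

theorem map_seg_zero (hφ : Function.Surjective φ)
    (hadd : ∀ X Y : NFin, φ (X + Y) = φ X + φ Y) (c : ℤ) :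
    ∃ d, φ (seg c 0) = seg d 0 := by
  refine ⟨_, eq_seg_of_minz_eq_maxz ?_⟩
  have h := width_map hφ hadd (seg c 0)
  have h1 := mem_seg_zero.1 (maxz_mem (seg c 0))
  have h2 := mem_seg_zero.1 (minz_mem (seg c 0))
  omega

theorem shiftToZero_map_shiftToZero (hφ : Function.Surjective φ)
    (hadd : ∀ X Y : NFin, φ (X + Y) = φ X + φ Y) (X : NFin) :
    shiftToZero (φ (shiftToZero X)) = shiftToZero (φ X) := by
  obtain ⟨d, hd⟩ := map_seg_zero hφ hadd (minz X)
  conv_rhs => rw [eq_tr_shiftToZero X, tr_eq_add, hadd, hd, ← tr_eq_add, shiftToZero_tr]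

theorem shiftToZero_eq_of_shiftToZero_map_eq (hφ : Function.Bijective φ)
    (hadd : ∀ X Y : NFin, φ (X + Y) = φ X + φ Y) {X Y : NFin}
    (h : shiftToZero (φ X) = shiftToZero (φ Y)) : shiftToZero X = shiftToZero Y := by
  obtain ⟨Z, hZ⟩ := hφ.2 (seg (minz (φ X) - minz (φ Y)) 0)
  have hZw := width_map hφ.2 hadd Z
  rw [hZ] at hZw
  have h1 := mem_seg_zero.1 (maxz_mem (seg (minz (φ X) - minz (φ Y)) 0))
  have h2 := mem_seg_zero.1 (minz_mem (seg (minz (φ X) - minz (φ Y)) 0))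
  have hZs := eq_seg_of_minz_eq_maxz (X := Z) (by omega)
  have hXY : X = Y + Z := by
    apply hφ.1
    rw [hadd, hZ, ← tr_eq_add]
    apply Subtype.ext
    ext z
    have hz : z - minz (φ X) ∈ (shiftToZero (φ X)).1 ↔ z - minz (φ X) ∈ (shiftToZero (φ Y)).1 := by
      rw [h]
    rw [mem_shiftToZero, mem_shiftToZero, sub_add_cancel] at hz
    rw [hz, mem_tr, sub_sub_eq_add_sub, sub_add_eq_add_sub]
  rw [hXY, hZs, ← tr_eq_add, shiftToZero_tr]

/-- The action of `φ` on sets with minimum `0`. -/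
noncomputable def shiftedAction (φ : NFin → NFin) (X : Finset ℤ) : Finset ℤ :=
  if h : X.Nonempty then (shiftToZero (φ ⟨X, h⟩)).1 else ∅

theorem shiftedAction_coe (φ : NFin → NFin) (X : NFin) :
    shiftedAction φ X.1 = (shiftToZero (φ X)).1 :=
  dif_pos X.2

theorem isSpanAut_shiftedAction (hφ : Function.Bijective φ)
    (hadd : ∀ X Y : NFin, φ (X + Y) = φ X + φ Y) : IsSpanAut (shiftedAction φ) where
  spans {M X} hX := by
    lift X to NFin using ⟨0, hX.zero_mem⟩
    have h := spans_shiftToZero (φ X)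
    rw [width_map hφ.2 hadd, hX.minz_eq, hX.maxz_eq, sub_zero] at h
    rwa [shiftedAction_coe]
  map_add {M N X Y} hX hY := by
    lift X to NFin using ⟨0, hX.zero_mem⟩
    lift Y to NFin using ⟨0, hY.zero_mem⟩
    rw [← NFin.coe_add, shiftedAction_coe, shiftedAction_coe, shiftedAction_coe, hadd,
      shiftToZero_add, NFin.coe_add]
  surj {M Y} hY := by
    lift Y to NFin using ⟨0, hY.zero_mem⟩
    obtain ⟨X, rfl⟩ := hφ.2 Y
    refine ⟨(shiftToZero X).1, ?_, ?_⟩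
    · have h := spans_shiftToZero X
      rwa [← width_map hφ.2 hadd, hY.minz_eq, hY.maxz_eq, sub_zero] at h
    · rw [shiftedAction_coe, shiftToZero_map_shiftToZero hφ.2 hadd, shiftToZero_eq_self hY.minz_eq]
  inj {M X Y} hX hY h := by
    lift X to NFin using ⟨0, hX.zero_mem⟩
    lift Y to NFin using ⟨0, hY.zero_mem⟩
    rw [shiftedAction_coe, shiftedAction_coe] at h
    have h' := shiftToZero_eq_of_shiftToZero_map_eq hφ hadd (Subtype.ext h)
    rw [shiftToZero_eq_self hX.minz_eq, shiftToZero_eq_self hY.minz_eq] at h'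
    rw [h']

end Automorphism

/-- Every automorphism of `P_fin(ℤ)` is of the form `±φ_{α,β}` for some integers `α, β`. -/
theorem stmt_3 (φ : NFin → NFin) (hbij : Function.Bijective φ)
    (hadd : ∀ X Y : NFin, φ (X + Y) = φ X + φ Y) :
    ∃ α β : ℤ, φ = phiab α β ∨ φ = negF ∘ phiab α β := by
  obtain ⟨e, c, hmin⟩ : ∃ e c : ℤ, ∀ X, minz (φ X) = minz X * e + (maxz X - minz X) * c :=
    ⟨_, _, additive_eq_minz_maxz (fun X => minz (φ X)) fun X Y => by
      simp only [hadd, minz_add]⟩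
  have hmem : ∀ X z, z ∈ (φ X).1 ↔
      z - minz (φ X) ∈ shiftedAction φ (shiftToZero X).1 := by
    intro X z
    rw [shiftedAction_coe, shiftToZero_map_shiftToZero hbij.2 hadd, mem_shiftToZero, sub_add_cancel]
  rcases (isSpanAut_shiftedAction hbij hadd).eq_id_or_reflection with h | h
  · refine ⟨e - 1 - c, c, Or.inl ?_⟩
    funext X
    apply Subtype.ext
    ext z
    rw [hmem, h _ _ (spans_shiftToZero X), mem_shiftToZero, phiab, mem_tr, hmin]
    ring_nf
  · refine ⟨c - e, -1 - c, Or.inr ?_⟩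
    funext X
    apply Subtype.ext
    ext z
    rw [hmem, h _ _ (spans_shiftToZero X), mem_shiftToZero, Function.comp_apply, negF,
      Finset.mem_neg', phiab, mem_tr, hmin]
    ring_nf
end

section
/- For every integer α, the conjugation identity g_0 ∘ f_α ∘ g_0 = f_{−α} holds, where f_α(X) := X + α·min X − α·max X and g_0(X) := X − min X − max X for nonempty finite X ⊆ ℤ. More generally, for every φ in the set {f_β : β ∈ ℤ} one has φ ∘ f_α ∘ φ⁻¹ = f_α, and for every φ in {g_β : β ∈ ℤ} one has φ ∘ f_α ∘ φ⁻¹ = f_{−α}, where g_β(X) := X + (β−1)·min X − (β+1)·max X. -/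
open Finset Pointwise

theorem maxz_tr (X : NFin) (c : ℤ) : maxz (tr X c) = maxz X + c := by
  refine le_antisymm (Finset.max'_le _ _ _ fun y hy => ?_) (Finset.le_max' _ _ ?_)
  · obtain ⟨x, hx, rfl⟩ := Finset.mem_image.1 hy
    exact add_le_add_left (Finset.le_max' _ _ hx) c
  · exact Finset.mem_image_of_mem (· + c) (Finset.max'_mem X.1 X.2)

theorem tr_tr (X : NFin) (c d : ℤ) : tr (tr X c) d = tr X (c + d) := by
  simp only [tr, Finset.image_image, Function.comp_def, add_assoc]

theorem fa_comp_fa_comp_fa_neg (α β : ℤ) : fa β ∘ fa α ∘ fa (-β) = fa α := by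
  funext X
  simp only [Function.comp_apply, fa, minz_tr, maxz_tr, tr_tr]
  congr 1
  ring

theorem ga_comp_fa_comp_ga (α β : ℤ) : ga β ∘ fa α ∘ ga β = fa (-α) := by
  funext X
  simp only [Function.comp_apply, fa, ga, minz_tr, maxz_tr, tr_tr]
  congr 1
  ring

/-- Conjugation identities: `g_0 ∘ f_α ∘ g_0 = f_{−α}`; more generally
`f_β ∘ f_α ∘ f_β⁻¹ = f_α` and `g_β ∘ f_α ∘ g_β⁻¹ = f_{−α}`
(recall `f_β⁻¹ = f_{−β}` and `g_β⁻¹ = g_β`). -/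
theorem stmt_14 (α : ℤ) :
    ga 0 ∘ fa α ∘ ga 0 = fa (-α) ∧
    (∀ β : ℤ, fa β ∘ fa α ∘ fa (-β) = fa α) ∧
    (∀ β : ℤ, ga β ∘ fa α ∘ ga β = fa (-α)) :=
  ⟨ga_comp_fa_comp_ga α 0, fa_comp_fa_comp_fa_neg α, ga_comp_fa_comp_ga α⟩
end

section
/- Let X be a nonempty finite subset of ℤ and let m, n be non-negative integers with max X − min X ≤ m + n. Then the sumset ⟦−m, n⟧ + X equals the discrete interval ⟦−m + min X, n + max X⟧. -/
open Finset Pointwise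

/-- If `max X − min X ≤ m + n`, then `⟦−m, n⟧ + X = ⟦−m + min X, n + max X⟧`. -/
theorem stmt_16 (X : Finset ℤ) (hX : X.Nonempty) (m n : ℕ)
    (h : X.max' hX - X.min' hX ≤ (m : ℤ) + (n : ℤ)) :
    Finset.Icc (-(m : ℤ)) (n : ℤ) + X =
      Finset.Icc (-(m : ℤ) + X.min' hX) ((n : ℤ) + X.max' hX) := by
  ext z
  simp only [Finset.mem_add, Finset.mem_Icc]
  constructor
  · rintro ⟨a, ⟨ha₁, ha₂⟩, x, hx, rfl⟩
    exact ⟨add_le_add ha₁ (X.min'_le x hx), add_le_add ha₂ (X.le_max' x hx)⟩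
  · rintro ⟨hz₁, hz₂⟩
    by_cases hz : z ≤ n + X.min' hX
    · exact ⟨z - X.min' hX, by omega, X.min' hX, X.min'_mem hX, by omega⟩
    · exact ⟨z - X.max' hX, by omega, X.max' hX, X.max'_mem hX, by omega⟩
end

section
/- The set H = {f_α : α ∈ ℤ} ∪ {g_α : α ∈ ℤ} of bijections of the collection of nonempty finite subsets of ℤ is a group under composition, and it is isomorphic to the infinite dihedral group Dih_∞. Here f_α(X) := X + α·min X − α·max X and g_α(X) := X + (α−1)·min X − (α+1)·max X. -/
open Finset Pointwise

theorem fa_zero (X : NFin) : fa 0 X = X :=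
  Subtype.ext (by simp [fa, tr])

theorem fa_fa (α β : ℤ) (X : NFin) : fa α (fa β X) = fa (α + β) X := by
  simp only [fa, tr_tr, minz_tr, maxz_tr]
  congr 1
  ring

theorem fa_ga (α β : ℤ) (X : NFin) : fa α (ga β X) = ga (α + β) X := by
  simp only [fa, ga, tr_tr, minz_tr, maxz_tr]
  congr 1
  ring

theorem ga_fa (α β : ℤ) (X : NFin) : ga α (fa β X) = ga (α - β) X := by
  simp only [fa, ga, tr_tr, minz_tr, maxz_tr]
  congr 1
  ring

theorem ga_ga (α β : ℤ) (X : NFin) : ga α (ga β X) = fa (α - β) X := by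
  simp only [fa, ga, tr_tr, minz_tr, maxz_tr]
  congr 1
  ring

theorem minz_fa_pair (α : ℤ) : minz (fa α ⟨{0, 1}, by simp⟩) = -α := by
  rw [fa, minz_tr]
  simp [minz, maxz]

theorem minz_ga_pair (α : ℤ) : minz (ga α ⟨{0, 1}, by simp⟩) = -(α + 1) := by
  rw [ga, minz_tr]
  simp [minz, maxz]

theorem fa_injective : Function.Injective fa := fun α β h => by
  have h' := congrArg (fun τ => minz (τ ⟨{0, 1}, by simp⟩)) h
  simp only [minz_fa_pair] at h'
  omega

theorem ga_injective : Function.Injective ga := fun α β h => by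
  have h' := congrArg (fun τ => minz (τ ⟨{0, 1}, by simp⟩)) h
  simp only [minz_ga_pair] at h'
  omega

theorem fa_ne_ga (α β : ℤ) : fa α ≠ ga β := fun h => by
  have h' := congrArg (fun τ => minz (τ ⟨{1}, by simp⟩)) h
  simp only [fa, ga, minz_tr] at h'
  simp only [minz, maxz, Finset.min'_singleton, Finset.max'_singleton] at h'
  omega

/-- The rotation `r i` acts as `f_i` and the reflection `sr i` as `g_{-i}`. -/
def dihedralMap : DihedralGroup 0 → NFin → NFin
  | .r i => fa (show ℤ from i)
  | .sr i => ga (-(show ℤ from i))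

/-- The action of the infinite dihedral group on nonempty finite sets of integers. -/
@[reducible]
def dihedralAction : MulAction (DihedralGroup 0) NFin where
  smul := dihedralMap
  one_smul := fa_zero
  mul_smul := by
    rintro (i | i) (j | j) X
    · exact (fa_fa (show ℤ from i) (show ℤ from j) X).symm
    · refine Eq.trans ?_ (fa_ga (show ℤ from i) (-(show ℤ from j)) X).symm
      exact congrArg (ga · X) (show -((j : ℤ) - (i : ℤ)) = (i : ℤ) + -(j : ℤ) by ring)
    · refine Eq.trans ?_ (ga_fa (-(show ℤ from i)) (show ℤ from j) X).symm
      exact congrArg (ga · X) (show -((i : ℤ) + (j : ℤ)) = -(i : ℤ) - (j : ℤ) by ring)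
    · refine Eq.trans ?_ (ga_ga (-(show ℤ from i)) (-(show ℤ from j)) X).symm
      exact congrArg (fa · X) (show (j : ℤ) - (i : ℤ) = -(i : ℤ) - -(j : ℤ) by ring)

/-- The permutation representation of `dihedralAction`. -/
def dihedralHom : DihedralGroup 0 →* Equiv.Perm NFin :=
  @MulAction.toPermHom (DihedralGroup 0) NFin _ dihedralAction

theorem dihedralMap_injective : Function.Injective dihedralMap := by
  rintro (i | i) (j | j) h
  · exact congrArg DihedralGroup.r (fa_injective h)
  · exact (fa_ne_ga _ _ h).elim
  · exact (fa_ne_ga _ _ h.symm).elim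
  · exact congrArg DihedralGroup.sr (neg_injective (ga_injective h))

theorem dihedralHom_injective : Function.Injective dihedralHom := fun _ _ h =>
  dihedralMap_injective (congrArg DFunLike.coe h)

/-- The set `{f_α} ∪ {g_α}` is a group under composition, isomorphic to the
infinite dihedral group (realized in Mathlib as `DihedralGroup 0`). -/
theorem stmt_19 :
    ∃ H : Subgroup (Equiv.Perm NFin),
      (H : Set (Equiv.Perm NFin)) =
        {τ : Equiv.Perm NFin | ∃ α : ℤ, ⇑τ = fa α ∨ ⇑τ = ga α} ∧
      Nonempty (H ≃* DihedralGroup 0) := by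
  refine ⟨dihedralHom.range, Set.ext fun τ => ⟨?_, ?_⟩,
    ⟨(MonoidHom.ofInjective dihedralHom_injective).symm⟩⟩
  · rintro ⟨i | i, rfl⟩
    · exact ⟨i, Or.inl rfl⟩
    · exact ⟨-(show ℤ from i), Or.inr rfl⟩
  · rintro ⟨α, h | h⟩
    · exact ⟨.r (show ZMod 0 from α), DFunLike.coe_injective h.symm⟩
    · refine ⟨.sr (show ZMod 0 from (-α : ℤ)), DFunLike.coe_injective (Eq.trans ?_ h.symm)⟩
      exact congrArg ga (neg_neg α)
end
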